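/- arXiv:1104.0034 — 2 statements merged into one kernel-verified Lean document; each statement's English description precedes it below -/
import Mathlib

section
/- Let f be a transcendental entire function in the Eremenko–Lyubich class B, and assume there is a number R > 0 such that the iterates of f tend to infinity uniformly on the set {z ∈ P(f) : |z| ≥ R}, i.e. inf{|fⁿ(z)| : z ∈ P(f), |z| ≥ R} → ∞ as n → ∞. Let W be a wandering domain of f for which ∞ is a limit function (i.e. there is a sequence m_j → ∞ with |f^{m_j}(w)| → ∞ for w ∈ W), and let w ∈ W. Then there exist s ∈ S(f) and a sequence n_k → ∞ such that f^{n_k}(w) → s and f^{n_k−1}(w) → ∞. -/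
/-!
Formalization of: "Absence of wandering domains for functions in class B whose
singular values escape uniformly, under a thickness condition along an invariant set A."
-/

open Set Metric Filter Topology

/-- The chordal (spherical) distance between two finite points of the Riemann sphere. -/
noncomputable def sphericalDist (z w : ℂ) : ℝ :=
  2 * dist z w / (Real.sqrt (1 + ‖z‖ ^ 2) * Real.sqrt (1 + ‖w‖ ^ 2))

/-- A transcendental entire function: entire and not a polynomial. -/
def TranscendentalEntire (f : ℂ → ℂ) : Prop :=
  Differentiable ℂ f ∧ ¬∃ p : Polynomial ℂ, ∀ z : ℂ, f z = p.eval z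

/-- `S` is the set of singular values of `f`: the smallest closed set `S ⊆ ℂ` such that
`f : ℂ ∖ f⁻¹(S) → ℂ ∖ S` is a covering map. -/
def IsSingularValueSet (f : ℂ → ℂ) (S : Set ℂ) : Prop :=
  IsClosed S ∧ IsCoveringMapOn f Sᶜ ∧
    ∀ T : Set ℂ, IsClosed T → IsCoveringMapOn f Tᶜ → S ⊆ T

/-- The Fatou set of an entire function: points having a neighbourhood on which the family of
iterates is equicontinuous with respect to the spherical metric. -/
def FatouSet (f : ℂ → ℂ) : Set ℂ :=
  {z : ℂ | ∃ N : Set ℂ, IsOpen N ∧ z ∈ N ∧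
    ∀ x ∈ N, ∀ ε > (0 : ℝ), ∃ δ > (0 : ℝ), ∀ y ∈ N, dist y x < δ →
      ∀ n : ℕ, sphericalDist (f^[n] y) (f^[n] x) < ε}

/-- A wandering domain: a connected component `W` of the Fatou set whose forward images are
pairwise disjoint. -/
def IsWanderingDomain (f : ℂ → ℂ) (W : Set ℂ) : Prop :=
  (∃ z ∈ FatouSet f, W = connectedComponentIn (FatouSet f) z) ∧
    ∀ m n : ℕ, m ≠ n → f^[m] '' W ∩ f^[n] '' W = ∅


/-- The postsingular set `P(f)`: the closure of the union of the forward orbits of the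
singular values `S`. -/
def PostsingularSet (f : ℂ → ℂ) (S : Set ℂ) : Set ℂ :=
  closure (⋃ n : ℕ, f^[n] '' S)

/-!
In logarithmic coordinates inverse branches of `f` near `∞` are contractions (Eremenko–Lyubich).
Hence the orbit of `w` cannot escape: otherwise, `f^n(W)` being disjoint from `W`, whole
neighbourhoods of `w` would escape, contradicting the expansion. As `∞` is a limit function, the
orbit makes arbitrarily long excursions near `∞`, each returning to a fixed disc.

If the conclusion fails, a disc of fixed radius about each return point avoids `S(f)`. A smaller one
can be pulled back along the excursion in logarithmic coordinates: the last step is controlled by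
bounded distortion, the earlier ones contract. By uniform escape of `P(f)`, an excursion that is
long enough starts in a pulled-back disc avoiding `P(f)`, so the disc can be pulled back all the way
to `w`. The resulting inverse branch omits a value of bounded modulus, since otherwise `f^n` would
map a compact disc into itself; bounded distortion then shows that `f^n(W)` contains a disc of fixed
radius about `f^n(w)` for infinitely many `n` with `f^n(w)` bounded. But the sets `f^n(W)` are
pairwise disjoint.
-/

section CoveringMaps

theorem eventually_deriv_ne_zero_of_injOn {f : ℂ → ℂ} {s : Set ℂ} {x : ℂ} (hf : AnalyticAt ℂ f x)
    (hs : s ∈ 𝓝 x) (hinj : InjOn f s) : ∀ᶠ z in 𝓝[≠] x, deriv f z ≠ 0 := by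
  refine hf.deriv.eventually_eq_zero_or_eventually_ne_zero.resolve_left fun hzero ↦ ?_
  obtain ⟨δ, hδ, hball⟩ := eventually_nhds_iff_ball.1
    (hzero.and (hf.eventually_analyticAt.and hs))
  have hconst : ∀ z ∈ ball x δ, f z = f x := fun z hz ↦
    isOpen_ball.is_const_of_deriv_eq_zero (convex_ball x δ).isPreconnected
      (fun y hy ↦ (hball y hy).2.1.differentiableAt.differentiableWithinAt)
      (fun y hy ↦ (hball y hy).1) hz (mem_ball_self hδ)
  obtain ⟨z, hz, hzx⟩ : ∃ z ∈ ball x δ, z ≠ x :=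
    (Filter.inter_mem (nhdsWithin_le_nhds (ball_mem_nhds x hδ)) self_mem_nhdsWithin :
      ball x δ ∩ {x}ᶜ ∈ 𝓝[≠] x) |> Filter.nonempty_of_mem
  exact hzx (hinj (hball z hz).2.2 (hball x (mem_ball_self hδ)).2.2 (hconst z hz))

theorem differentiableAt_symm_of_differentiableOn (e : OpenPartialHomeomorph ℂ ℂ)
    (he : DifferentiableOn ℂ e e.source) {y : ℂ} (hy : y ∈ e.target) :
    DifferentiableAt ℂ e.symm y := by
  have hcont : ContinuousAt e.symm y := e.continuousAt_symm hy
  have hderiv : ∀ᶠ x in 𝓝[≠] e.symm y, deriv e x ≠ 0 :=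
    eventually_deriv_ne_zero_of_injOn (he.analyticOnNhd e.open_source _ (e.map_target hy))
      (e.open_source.mem_nhds (e.map_target hy)) e.injOn
  have hsymm : Tendsto e.symm (𝓝[≠] y) (𝓝[≠] e.symm y) := by
    refine tendsto_nhdsWithin_iff.2 ⟨hcont.tendsto.mono_left nhdsWithin_le_nhds, ?_⟩
    filter_upwards [self_mem_nhdsWithin, nhdsWithin_le_nhds (e.open_target.mem_nhds hy)]
      with z hz hzt h using hz (e.symm.injOn hzt hy h)
  refine (Complex.analyticAt_of_differentiable_on_punctured_nhds_of_continuousAt ?_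
    hcont).differentiableAt
  filter_upwards [hsymm.eventually hderiv, nhdsWithin_le_nhds (e.open_target.mem_nhds hy)]
    with z hz hzt
  exact (e.hasDerivAt_symm hzt hz
    (he.hasDerivAt (e.open_source.mem_nhds (e.map_target hzt)))).differentiableAt

variable {p : ℂ → ℂ} {T U : Set ℂ}

theorem differentiableAt_of_comp_eq (hp : Differentiable ℂ p) (hcov : IsCoveringMapOn p T)
    {h φ : ℂ → ℂ} {z : ℂ} (hφ : ContinuousAt φ z) (hh : DifferentiableAt ℂ h z) (hT : h z ∈ T)
    (hlift : p ∘ φ =ᶠ[𝓝 z] h) : DifferentiableAt ℂ φ z := by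
  have hz : p (φ z) = h z := hlift.eq_of_nhds
  obtain ⟨e, hze, rfl⟩ := hcov.isLocalHomeomorphOn (φ z) (mem_preimage.2 (hz ▸ hT))
  have hsymm : DifferentiableAt ℂ e.symm (h z) :=
    differentiableAt_symm_of_differentiableOn e hp.differentiableOn (hz ▸ e.map_source hze)
  refine (hsymm.comp z hh).congr_of_eventuallyEq ?_
  filter_upwards [hlift, hφ.eventually (e.open_source.mem_nhds hze)] with x hx hxe
  rw [Function.comp_apply, ← hx, Function.comp_apply, e.left_inv hxe]

theorem exists_holomorphic_lift (hp : Differentiable ℂ p) (hcov : IsCoveringMapOn p T)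
    (hUo : IsOpen U) (hUc : Convex ℝ U) {h : ℂ → ℂ} (hh : DifferentiableOn ℂ h U)
    (hT : MapsTo h U T) {a e : ℂ} (ha : a ∈ U) (he : p e = h a) :
    ∃ φ : ℂ → ℂ, DifferentiableOn ℂ φ U ∧ φ a = e ∧ EqOn (p ∘ φ) h U := by
  classical
  have : ContractibleSpace U := hUc.contractibleSpace ⟨a, ha⟩
  have := hUo.locallyPathConnectedSpace
  obtain ⟨F, ⟨hFa, hF⟩, -⟩ := hcov.existsUnique_continuousMap_lifts (A := U)
    ⟨U.domRestrict h, continuousOn_iff_continuous_domRestrict.mp hh.continuousOn⟩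
    (a₀ := ⟨a, ha⟩) (e₀ := e) he (fun x ↦ hT x.2)
  obtain ⟨φ, hφ⟩ : ∃ φ : ℂ → ℂ, ∀ z : U, φ z = F z :=
    ⟨fun z ↦ if hz : z ∈ U then F ⟨z, hz⟩ else 0, by simp⟩
  have hlift : EqOn (p ∘ φ) h U := fun z hz ↦ by
    simpa [hφ ⟨z, hz⟩] using congrFun hF ⟨z, hz⟩
  have hcont : ContinuousOn φ U := by
    rw [continuousOn_iff_continuous_domRestrict, show U.domRestrict φ = F from funext hφ]
    exact map_continuous F
  refine ⟨φ, fun z hz ↦ ?_, (hφ ⟨a, ha⟩).trans hFa, hlift⟩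
  have hU : U ∈ 𝓝 z := hUo.mem_nhds hz
  exact (differentiableAt_of_comp_eq hp hcov (hcont.continuousAt hU) (hh.differentiableAt hU)
    (hT hz) (hlift.eventuallyEq_of_mem hU)).differentiableWithinAt

theorem eqOn_of_comp_eqOn (hcov : IsCoveringMapOn p T) (hU : IsPreconnected U) {φ ψ : ℂ → ℂ}
    (hφ : ContinuousOn φ U) (hψ : ContinuousOn ψ U) (hT : MapsTo (p ∘ φ) U T)
    (heq : EqOn (p ∘ φ) (p ∘ ψ) U) {a : ℂ} (ha : a ∈ U) (hφψ : φ a = ψ a) : EqOn φ ψ U := by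
  have : PreconnectedSpace U := isPreconnected_iff_preconnectedSpace.1 hU
  have hlifts := hcov.isCoveringMap_restrictPreimage.eq_of_comp_eq (A := U)
    (g₁ := fun z ↦ ⟨φ z, hT z.2⟩)
    (g₂ := fun z ↦ ⟨ψ z, mem_preimage.2 <| by simpa only [heq z.2] using! hT z.2⟩)
    ((continuousOn_iff_continuous_domRestrict.1 hφ).subtype_mk _)
    ((continuousOn_iff_continuous_domRestrict.1 hψ).subtype_mk _)
    (funext fun z ↦ Subtype.ext (heq z.2)) ⟨a, ha⟩ (Subtype.ext hφψ)
  exact fun z hz ↦ congrArg Subtype.val (congrFun hlifts ⟨z, hz⟩)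

theorem exists_holomorphic_log (hUo : IsOpen U) (hUc : Convex ℝ U) {h : ℂ → ℂ}
    (hh : DifferentiableOn ℂ h U) (hne : ∀ z ∈ U, h z ≠ 0) {a e : ℂ} (ha : a ∈ U)
    (he : Complex.exp e = h a) :
    ∃ φ : ℂ → ℂ, DifferentiableOn ℂ φ U ∧ φ a = e ∧ EqOn (Complex.exp ∘ φ) h U :=
  exists_holomorphic_lift Complex.differentiable_exp Complex.isCoveringMapOn_exp hUo hUc hh hne ha
    he

end CoveringMaps

section Bloch

theorem closedBall_subset_image_of_norm_deriv_sub_le {𝕜 : Type*} [RCLike 𝕜] {g : 𝕜 → 𝕜} {z a : 𝕜}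
    {ρ : ℝ} (hρ : 0 ≤ ρ) (ha : a ≠ 0) (hg : ∀ x ∈ closedBall z ρ, DifferentiableAt 𝕜 g x)
    (hderiv : ∀ x ∈ closedBall z ρ, ‖deriv g x - a‖ ≤ ‖a‖ / 2) :
    closedBall (g z) (‖a‖ / 2 * ρ) ⊆ g '' closedBall z ρ := by
  have happrox : ApproximatesLinearOn g (ContinuousLinearMap.toSpanSingleton 𝕜 a) (closedBall z ρ)
      (‖a‖₊ / 2) := fun x hx y hy ↦ by
    have hder : ∀ u ∈ closedBall z ρ, HasDerivAt (fun v ↦ g v - v * a) (deriv g u - a) u :=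
      fun u hu ↦ (hg u hu).hasDerivAt.sub (by simpa using (hasDerivAt_id u).mul_const a)
    rw [ContinuousLinearMap.toSpanSingleton_apply, smul_eq_mul,
      show g x - g y - (x - y) * a = g x - x * a - (g y - y * a) by ring]
    simpa using (convex_closedBall z ρ).norm_image_sub_le_of_norm_hasDerivWithin_le
      (fun u hu ↦ (hder u hu).hasDerivWithinAt) hderiv hy hx
  have hradius : (((‖a‖₊⁻¹ : NNReal) : ℝ)⁻¹ - (‖a‖₊ / 2 : NNReal)) * ρ = ‖a‖ / 2 * ρ := by
    push_cast
    rw [inv_inv]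
    ring
  rw [← hradius]
  exact happrox.surjOn_closedBall_of_nonlinearRightInverse
    ⟨fun y ↦ y / a, ‖a‖₊⁻¹, fun y ↦ by simp [div_eq_inv_mul], fun y ↦ by simp [ha]⟩ hρ subset_rfl

theorem closedBall_subset_image_of_norm_deriv_le_two_mul {g : ℂ → ℂ} {z : ℂ} {d : ℝ} (hd : 0 < d)
    (hg : DifferentiableOn ℂ g (ball z d))
    (hderiv : ∀ x ∈ ball z d, ‖deriv g x‖ ≤ 2 * ‖deriv g z‖) :
    closedBall (g z) (‖deriv g z‖ * d / 12) ⊆ g '' ball z d := by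
  rcases eq_or_ne (deriv g z) 0 with h0 | h0
  · simpa [h0] using ⟨z, mem_ball_self hd, rfl⟩
  have hsub : closedBall z (d / 6) ⊆ ball z d := closedBall_subset_ball (by linarith)
  have hschwarz : ∀ x ∈ closedBall z (d / 6), ‖deriv g x - deriv g z‖ ≤ ‖deriv g z‖ / 2 :=
    fun x hx ↦ by
    rw [← dist_eq_norm]
    calc dist (deriv g x) (deriv g z) ≤ 3 * ‖deriv g z‖ / d * dist x z := by
          refine Complex.dist_le_div_mul_dist_of_mapsTo_ball (hg.deriv isOpen_ball) (fun y hy ↦ ?_)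
            (hsub hx)
          rw [mem_closedBall, dist_eq_norm]
          linarith [norm_sub_le (deriv g y) (deriv g z), hderiv y hy]
      _ ≤ 3 * ‖deriv g z‖ / d * (d / 6) := by gcongr; exact hx
      _ = ‖deriv g z‖ / 2 := by field_simp; norm_num
  have := closedBall_subset_image_of_norm_deriv_sub_le (by positivity) h0
    (fun x hx ↦ hg.differentiableAt (isOpen_ball.mem_nhds (hsub hx))) hschwarz
  rw [show ‖deriv g z‖ * d / 12 = ‖deriv g z‖ / 2 * (d / 6) by ring]
  exact this.trans (image_mono hsub)

/-- **Bloch's theorem**, with a non-optimal constant. -/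
theorem exists_closedBall_subset_image {g : ℂ → ℂ} {z₀ : ℂ} {r : ℝ} (hr : 0 < r)
    (hg : DifferentiableOn ℂ g (ball z₀ r)) :
    ∃ c, closedBall c (‖deriv g z₀‖ * r / 48) ⊆ g '' ball z₀ r := by
  have hsub : closedBall z₀ (3 * (r / 4)) ⊆ ball z₀ r := closedBall_subset_ball (by linarith)
  have hcont : ContinuousOn (fun z ↦ ‖deriv g z‖) (closedBall z₀ (3 * (r / 4))) :=
    ((hg.deriv isOpen_ball).continuousOn.mono hsub).norm
  have : CompleteSpace (closedBall z₀ (3 * (r / 4))) := isClosed_closedBall.completeSpace_coe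
  obtain ⟨d, hd, ⟨z, _⟩, hdr, hz, hmax, hderiv⟩ :=
    hofer (⟨z₀, mem_closedBall_self (by positivity)⟩ : closedBall z₀ (3 * (r / 4))) (r / 4)
      (by positivity) hcont.domRestrict fun _ ↦ norm_nonneg _
  simp only [Subtype.dist_eq, Subtype.forall, domRestrict_apply] at hz hmax hderiv
  have hball : ball z d ⊆ closedBall z₀ (3 * (r / 4)) := fun x hx ↦
    mem_closedBall.2 (by linarith [dist_triangle x z z₀, mem_ball.1 hx])
  refine ⟨g z, (closedBall_subset_closedBall ?_).trans
    ((closedBall_subset_image_of_norm_deriv_le_two_mul hd (hg.mono (hball.trans hsub))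
      fun x hx ↦ hderiv x (hball hx) (mem_ball'.1 hx).le).trans
      (image_mono (hball.trans hsub)))⟩
  linarith

theorem norm_deriv_mul_le_of_ne_add_two_pi_I {g : ℂ → ℂ} {z₀ : ℂ} {r : ℝ} (hr : 0 < r)
    (hg : DifferentiableOn ℂ g (ball z₀ r))
    (h : ∀ x ∈ ball z₀ r, ∀ y ∈ ball z₀ r, g x ≠ g y + 2 * Real.pi * Complex.I) :
    ‖deriv g z₀‖ * r ≤ 400 := by
  by_contra! hlt
  obtain ⟨c, hc⟩ := exists_closedBall_subset_image hr hg
  have hpi : 2 * Real.pi ≤ ‖deriv g z₀‖ * r / 48 := by linarith [Real.pi_lt_four]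
  obtain ⟨x, hx, hxc⟩ := hc (show c + 2 * Real.pi * Complex.I ∈ _ by
    simpa [abs_of_pos Real.pi_pos] using hpi)
  obtain ⟨y, hy, hyc⟩ := hc (mem_closedBall_self (by positivity))
  exact h x hx y hy (by rw [hxc, hyc])

end Bloch

section Distortion

variable {Φ : ℂ → ℂ} {c a : ℂ} {r : ℝ}

theorem exists_log_norm_sub_le_of_injOn_of_omits (hr : 0 < r) (hΦ : DifferentiableOn ℂ Φ (ball c r))
    (hinj : InjOn Φ (ball c r)) (ha : ∀ z ∈ ball c r, Φ z ≠ a) :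
    ∃ φ : ℂ → ℂ, EqOn (Complex.exp ∘ φ) (fun z ↦ Φ z - a) (ball c r) ∧
      ∀ z ∈ closedBall c (r / 2), ‖φ z - φ c‖ ≤ 800 / r * dist z c := by
  have hc := mem_ball_self (x := c) hr
  have hne : ∀ z ∈ ball c r, Φ z - a ≠ 0 := fun z hz ↦ sub_ne_zero.2 (ha z hz)
  obtain ⟨φ, hφ, -, hexp⟩ := exists_holomorphic_log isOpen_ball (convex_ball c r)
    (hΦ.sub_const a) hne hc (Complex.exp_log (hne c hc))
  have hno : ∀ x ∈ ball c r, ∀ y ∈ ball c r, φ x ≠ φ y + 2 * Real.pi * Complex.I := by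
    intro x hx y hy hxy
    have hΦxy : Φ x - a = Φ y - a := by
      rw [← show Complex.exp (φ x) = Φ x - a from hexp hx,
        ← show Complex.exp (φ y) = Φ y - a from hexp hy, hxy, Complex.exp_periodic]
    rw [hinj hx hy (sub_left_inj.1 hΦxy)] at hxy
    exact Complex.two_pi_I_ne_zero (left_eq_add.1 hxy)
  have hsub : closedBall c (r / 2) ⊆ ball c r := closedBall_subset_ball (by linarith)
  have hderiv : ∀ y ∈ closedBall c (r / 2), ‖deriv φ y‖ ≤ 800 / r := by
    intro y hy
    have hb : ball y (r / 2) ⊆ ball c r := ball_subset_ball' (by linarith [mem_closedBall.1 hy])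
    have := norm_deriv_mul_le_of_ne_add_two_pi_I (half_pos hr) (hφ.mono hb)
      fun x hx y hy ↦ hno x (hb hx) y (hb hy)
    rw [le_div_iff₀ hr]
    linarith
  refine ⟨φ, hexp, fun z hz ↦ ?_⟩
  rw [dist_eq_norm]
  exact (convex_closedBall c (r / 2)).norm_image_sub_le_of_norm_deriv_le
    (fun x hx ↦ hφ.differentiableAt (isOpen_ball.mem_nhds (hsub hx))) hderiv
    (mem_closedBall_self (by positivity)) hz

theorem norm_sub_le_of_injOn_of_omits (hr : 0 < r) (hΦ : DifferentiableOn ℂ Φ (ball c r))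
    (hinj : InjOn Φ (ball c r)) (ha : ∀ z ∈ ball c r, Φ z ≠ a) {z : ℂ} (hz : 800 * dist z c ≤ r) :
    ‖Φ z - Φ c‖ ≤ 1600 * (dist z c / r) * ‖Φ c - a‖ := by
  obtain ⟨φ, hexp, hφ⟩ := exists_log_norm_sub_le_of_injOn_of_omits hr hΦ hinj ha
  have hz2 : dist z c ≤ r / 2 := by linarith [dist_nonneg (x := z) (y := c)]
  have hzr : z ∈ ball c r := mem_ball.2 (by linarith)
  have hdist : ‖φ z - φ c‖ ≤ 800 * (dist z c / r) := (hφ z hz2).trans_eq (by ring)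
  have hle1 : ‖φ z - φ c‖ ≤ 1 := hdist.trans (by rwa [← mul_div_assoc, div_le_one hr])
  have heq : Φ z - Φ c = (Complex.exp (φ z - φ c) - 1) * (Φ c - a) := by
    have hne := Complex.exp_ne_zero (φ c)
    have h1 : Complex.exp (φ z) = Φ z - a := hexp hzr
    have h2 : Complex.exp (φ c) = Φ c - a := hexp (mem_ball_self hr)
    rw [Complex.exp_sub, ← h2, sub_one_mul, div_mul_cancel₀ _ hne, h1, h2, sub_sub_sub_cancel_right]
  rw [heq, norm_mul]
  gcongr
  linarith [Complex.norm_exp_sub_one_le hle1]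

/-- The comparison value `a` makes `‖Φ c - a‖` at most `2 * ‖Φ c‖`, which turns the distortion bound
for `Φ` into a bound for `Φ / Φ c - 1`. -/
theorem exists_log_of_injOn_of_omits (hr : 0 < r) (hΦ : DifferentiableOn ℂ Φ (ball c r))
    (hinj : InjOn Φ (ball c r)) (ha : ∀ z ∈ ball c r, Φ z ≠ a) (hac : ‖a‖ ≤ ‖Φ c‖)
    (hΦc : Φ c ≠ 0) :
    ∃ ψ : ℂ → ℂ, DifferentiableOn ℂ ψ (ball c (r / 12800)) ∧
      ∀ z ∈ ball c (r / 12800), Complex.exp (ψ z) = Φ z ∧ ‖ψ z - ψ c‖ ≤ 1 := by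
  have hsmall : ∀ z ∈ ball c (r / 12800), ‖Φ z / Φ c - 1‖ ≤ 1 / 4 := by
    intro z hz
    have hzr : dist z c / r ≤ 1 / 12800 := by
      rw [div_le_iff₀ hr]
      linarith [mem_ball.1 hz]
    rw [div_sub_one hΦc, norm_div, div_le_iff₀ (norm_pos_iff.2 hΦc)]
    calc ‖Φ z - Φ c‖ ≤ 1600 * (dist z c / r) * ‖Φ c - a‖ :=
          norm_sub_le_of_injOn_of_omits hr hΦ hinj ha (by linarith [mem_ball.1 hz])
      _ ≤ 1600 * (1 / 12800) * (2 * ‖Φ c‖) := by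
          gcongr
          linarith [norm_sub_le (Φ c) a]
      _ = 1 / 4 * ‖Φ c‖ := by ring
  have hslit : ∀ z ∈ ball c (r / 12800), Φ z / Φ c ∈ Complex.slitPlane := fun z hz ↦ by
    simpa using Complex.mem_slitPlane_of_norm_lt_one ((hsmall z hz).trans_lt (by norm_num))
  refine ⟨fun z ↦ Complex.log (Φ c) + Complex.log (Φ z / Φ c),
    (((hΦ.mono (ball_subset_ball (by linarith))).div_const (Φ c)).clog hslit).const_add _,
    fun z hz ↦ ⟨?_, ?_⟩⟩
  · rw [Complex.exp_add, Complex.exp_log hΦc,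
      Complex.exp_log (Complex.slitPlane_ne_zero (hslit z hz)), mul_div_cancel₀ _ hΦc]
  · have hlog := Complex.norm_log_one_add_half_le_self ((hsmall z hz).trans (by norm_num))
    rw [add_sub_cancel] at hlog
    simp only [div_self hΦc, Complex.log_one, add_zero, add_sub_cancel_left]
    linarith [hsmall z hz]

end Distortion

section Growth

/-- Cauchy's estimates on large circles annihilate all Taylor coefficients of order `> m`. -/
theorem exists_polynomial_of_norm_le_mul_pow {f : ℂ → ℂ} (hf : Differentiable ℂ f) {C ρ : ℝ}
    {m : ℕ} (h : ∀ z, ρ ≤ ‖z‖ → ‖f z‖ ≤ C * ‖z‖ ^ m) :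
    ∃ p : Polynomial ℂ, ∀ z, f z = p.eval z := by
  have hzero : ∀ n, m < n → iteratedDeriv n f 0 = 0 := by
    intro n hn
    have hlim : Tendsto (fun r : ℝ ↦ n.factorial * C * (r ^ (n - m))⁻¹) atTop (𝓝 0) := by
      simpa using (tendsto_inv_atTop_zero.comp
        (tendsto_pow_atTop (α := ℝ) (Nat.sub_ne_zero_of_lt hn))).const_mul (n.factorial * C)
    refine norm_le_zero_iff.1 (ge_of_tendsto hlim ?_)
    filter_upwards [eventually_gt_atTop 0, eventually_ge_atTop ρ] with r hr hrρ
    have hcauchy := Complex.norm_iteratedDeriv_le_of_forall_mem_sphere_norm_le (c := 0)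
      (C := C * r ^ m) n hr hf.diffContOnCl fun z hz ↦ by
        rw [mem_sphere_zero_iff_norm] at hz
        simpa [hz] using h z (hz ▸ hrρ)
    refine hcauchy.trans_eq ?_
    rw [← Nat.sub_add_cancel hn.le, pow_add, Nat.add_sub_cancel]
    field_simp
  refine ⟨∑ n ∈ Finset.range (m + 1),
    Polynomial.monomial n ((n.factorial : ℂ)⁻¹ * iteratedDeriv n f 0), fun z ↦ ?_⟩
  rw [← Complex.taylorSeries_eq_of_entire' 0 z hf, Polynomial.eval_finsetSum,
    tsum_eq_sum (s := Finset.range (m + 1)) fun n hn ↦ by simp [hzero n (by simpa using hn)]]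
  simp

theorem exists_eventually_forall_mem_ball_norm_lt {ι : Type*} {l : Filter ι} {g : ι → ℂ → ℂ}
    {w : ℂ} {r C η : ℝ} (hr : 0 < r) (hg : ∀ i, DifferentiableOn ℂ (g i) (ball w r))
    (hC : ∀ i, ∀ z ∈ ball w r, ‖g i z‖ ≤ C) (hlim : Tendsto (fun i ↦ g i w) l (𝓝 0)) (hη : 0 < η) :
    ∃ ρ > 0, ∀ᶠ i in l, ∀ z ∈ ball w ρ, ‖g i z‖ < η := by
  obtain ⟨ρ, hρη, hρ⟩ : ∃ ρ, 2 * C / r * ρ < η / 2 ∧ 0 < ρ := by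
    have hlim : Tendsto (fun ρ ↦ 2 * C / r * ρ) (𝓝[>] 0) (𝓝 (2 * C / r * 0)) :=
      tendsto_nhdsWithin_of_tendsto_nhds (Continuous.tendsto (by fun_prop) 0)
    rw [mul_zero] at hlim
    exact ((hlim.eventually_lt_const (half_pos hη)).and self_mem_nhdsWithin).exists
  refine ⟨min ρ r, lt_min hρ hr, ?_⟩
  filter_upwards [hlim.norm.eventually_lt_const (norm_zero.trans_lt (half_pos hη))] with i hi z hz
  have hzr : z ∈ ball w r := ball_subset_ball (min_le_right _ _) hz
  have hschwarz : dist (g i z) (g i w) ≤ 2 * C / r * dist z w := by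
    refine Complex.dist_le_div_mul_dist_of_mapsTo_ball (hg i) (fun x hx ↦ ?_) hzr
    rw [mem_closedBall, dist_eq_norm]
    linarith [norm_sub_le (g i x) (g i w), hC i x hx, hC i w (mem_ball_self hr)]
  have hC0 : 0 ≤ C := (norm_nonneg _).trans (hC i z hzr)
  have hzρ : 2 * C / r * dist z w ≤ 2 * C / r * ρ := by
    gcongr
    exact (mem_ball.1 hz).le.trans (min_le_left _ _)
  rw [dist_eq_norm] at hschwarz
  linarith [norm_le_norm_add_norm_sub' (g i z) (g i w)]

/-- The reciprocals `1 / (F i - a)` are bounded by `1 / δ` and tend to `0` at the centre. -/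
theorem exists_eventually_forall_mem_ball_lt_norm {ι : Type*} {l : Filter ι} {F : ι → ℂ → ℂ}
    {w a : ℂ} {r δ : ℝ} (hr : 0 < r) (hδ : 0 < δ) (hF : ∀ i, DifferentiableOn ℂ (F i) (ball w r))
    (hFa : ∀ i, ∀ z ∈ ball w r, F i z ∉ ball a δ) (hlim : Tendsto (fun i ↦ ‖F i w‖) l atTop)
    (M : ℝ) : ∃ ρ > 0, ∀ᶠ i in l, ∀ z ∈ ball w ρ, M < ‖F i z‖ := by
  have hdist : ∀ i, ∀ z ∈ ball w r, δ ≤ ‖F i z - a‖ := fun i z hz ↦ by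
    simpa [dist_eq_norm] using hFa i z hz
  have hne : ∀ i, ∀ z ∈ ball w r, F i z - a ≠ 0 := fun i z hz ↦
    norm_pos_iff.1 (hδ.trans_le (hdist i z hz))
  have hlim' : Tendsto (fun i ↦ (F i w - a)⁻¹) l (𝓝 0) :=
    tendsto_inv₀_cobounded.comp (tendsto_norm_atTop_iff_cobounded.1
      (tendsto_atTop_mono (fun i ↦ norm_sub_norm_le _ _)
        (tendsto_atTop_add_const_right _ (-‖a‖) hlim)))
  obtain ⟨ρ, hρ, hev⟩ := exists_eventually_forall_mem_ball_norm_lt (g := fun i z ↦ (F i z - a)⁻¹)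
    (C := δ⁻¹) (η := (|M| + ‖a‖ + 1)⁻¹) hr (fun i ↦ ((hF i).sub_const a).inv (hne i))
    (fun i z hz ↦ by rw [norm_inv]; gcongr; exact hdist i z hz) hlim' (by positivity)
  refine ⟨min ρ r, lt_min hρ hr, hev.mono fun i hi z hz ↦ ?_⟩
  have hlt := hi z (ball_subset_ball (min_le_left _ _) hz)
  rw [norm_inv, inv_lt_inv₀ (norm_pos_iff.2 (hne i z (ball_subset_ball (min_le_right _ _) hz)))
    (by positivity)] at hlt
  linarith [norm_sub_le (F i z) a, le_abs_self M]

end Growth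

section LiftsOfExp

/-- The right half-plane `{Re > h}`, on which inverse branches are considered in logarithmic
coordinates. -/
def rightHalfPlane (h : ℝ) : Set ℂ := {ζ | h < ζ.re}

theorem isOpen_rightHalfPlane (h : ℝ) : IsOpen (rightHalfPlane h) :=
  isOpen_lt continuous_const Complex.continuous_re

theorem convex_rightHalfPlane (h : ℝ) : Convex ℝ (rightHalfPlane h) :=
  convex_halfSpace_re_gt h

theorem ball_subset_rightHalfPlane {h r : ℝ} {ζ : ℂ} (hr : h + r ≤ ζ.re) :
    ball ζ r ⊆ rightHalfPlane h := fun x hx ↦ by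
  have hre := (abs_lt.1 ((Complex.abs_re_le_norm (x - ζ)).trans_lt (mem_ball_iff_norm.1 hx))).1
  rw [Complex.sub_re] at hre
  change h < x.re
  linarith

theorem exp_lt_norm_exp_iff {h : ℝ} {ζ : ℂ} :
    Real.exp h < ‖Complex.exp ζ‖ ↔ ζ ∈ rightHalfPlane h := by
  rw [Complex.norm_exp, Real.exp_lt_exp, rightHalfPlane, mem_ofPred_eq]

/-- The function induced by `κ` on a punctured disc extends analytically by `0`, hence is open
there. -/
theorem nhdsNE_zero_le_map_of_periodic {κ : ℂ → ℂ} {c : ℝ} (hc : 0 < c)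
    (hκ : Function.Periodic κ c) (hhol : ∀ᶠ τ in comap Complex.im atTop, DifferentiableAt ℂ κ τ)
    (hzero : ZeroAtFilter (comap Complex.im atTop) κ)
    (hne : ∃ᶠ τ in comap Complex.im atTop, κ τ ≠ 0) :
    𝓝[≠] 0 ≤ map κ (comap Complex.im atTop) := by
  set K := Function.Periodic.cuspFunction c κ
  have hK0 : K 0 = 0 := Function.Periodic.cuspFunction_zero_of_zero_at_inf hc hzero
  have hana : AnalyticAt ℂ K 0 := by
    refine Complex.analyticAt_iff_eventually_differentiableAt.2 ?_
    filter_upwards [eventually_nhdsWithin_iff.1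
      (Function.Periodic.eventually_differentiableAt_cuspFunction_nhds_ne_zero hc hκ hhol)]
      with q hq
    obtain rfl | h := eq_or_ne q 0
    · exact Function.Periodic.differentiableAt_cuspFunction_zero hc hκ hhol hzero.boundedAtFilter
    · exact hq h
  have hopen : 𝓝 0 ≤ map K (𝓝 0) := by
    have hmap : 𝓝 (K 0) ≤ map K (𝓝 0) := by
      refine hana.eventually_constant_or_nhds_le_map_nhds.resolve_left fun hconst ↦ hne ?_
      filter_upwards [(Function.Periodic.qParam_tendsto hc).eventually (nhdsWithin_le_nhds hconst)]
        with τ hτ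
      rw [← Function.Periodic.eq_cuspFunction hc.ne' hκ, not_not]
      exact hτ.trans hK0
    rwa [hK0] at hmap
  intro s hs
  have hins : ∀ᶠ q in 𝓝 0, K q ∈ insert 0 s := by
    filter_upwards [eventually_nhdsWithin_iff.1
      ((Function.Periodic.invQParam_tendsto hc).eventually (mem_map.1 hs))] with q hq
    obtain rfl | h := eq_or_ne q 0
    · exact .inl hK0
    · have hKq : K q = κ (Function.Periodic.invQParam c q) :=
        Function.Periodic.cuspFunction_eq_of_nonzero c κ h
      exact .inr (hKq ▸ hq h)
  filter_upwards [mem_nhdsWithin_of_mem_nhds (hopen hins), self_mem_nhdsWithin] with q hq hq0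
  exact hq.resolve_left hq0

theorem exists_eventually_exp_mul_norm_le_of_periodic {κ : ℂ → ℂ} {c : ℝ} (hc : 0 < c)
    (hκ : Function.Periodic κ c) (hhol : ∀ᶠ τ in comap Complex.im atTop, DifferentiableAt ℂ κ τ)
    (hzero : ZeroAtFilter (comap Complex.im atTop) κ)
    (hne : ∃ᶠ τ in comap Complex.im atTop, κ τ ≠ 0) (h : ℝ) :
    ∃ C, ∀ᶠ q in 𝓝[≠] 0, ∃ τ : ℂ, h < τ.im ∧ κ τ = q ∧
      Real.exp (2 * Real.pi * τ.im / c) * ‖q‖ ≤ C := by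
  obtain ⟨C, hC⟩ := (Function.Periodic.exp_decay_of_zero_at_inf hc hκ hhol hzero).bound
  refine ⟨C, Eventually.mono (nhdsNE_zero_le_map_of_periodic hc hκ hhol hzero hne (image_mem_map
    ((tendsto_comap.eventually (eventually_gt_atTop h)).and hC))) ?_⟩
  rintro _ ⟨τ, ⟨hτ, hbound⟩, rfl⟩
  refine ⟨τ, hτ, rfl, ?_⟩
  rwa [Real.norm_of_nonneg (Real.exp_pos _).le, neg_mul, neg_mul, neg_div, Real.exp_neg,
    ← div_eq_mul_inv, le_div_iff₀' (Real.exp_pos _)] at hbound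

variable {f γ : ℂ → ℂ} {h₀ : ℝ}

/-- For a lift `γ` of `exp` along `f` this bounds `‖f z‖` by a power of `‖z‖` near `∞`. -/
theorem exists_eventually_exp_le_mul_norm_of_periodic {c : ℝ} (hc : 0 < c)
    (hγ : DifferentiableOn ℂ γ (rightHalfPlane h₀))
    (hper : ∀ ζ ∈ rightHalfPlane h₀, γ (ζ + c * Complex.I) = γ ζ)
    (hlim : Tendsto γ (comap Complex.re atTop) (Bornology.cobounded ℂ)) :
    ∃ C, ∀ᶠ z in Bornology.cobounded ℂ, ∃ ζ ∈ rightHalfPlane h₀,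
      γ ζ = z ∧ Real.exp (2 * Real.pi * ζ.re / c) ≤ C * ‖z‖ := by
  classical
  let κ : ℂ → ℂ := fun τ ↦ if h₀ < τ.im then (γ (-Complex.I * τ))⁻¹ else 0
  have hκ : ∀ τ : ℂ, h₀ < τ.im → κ τ = (γ (-Complex.I * τ))⁻¹ := fun τ hτ ↦ if_pos hτ
  have hre (τ : ℂ) : (-Complex.I * τ).re = τ.im := by simp
  have hκper : Function.Periodic κ c := fun τ ↦ by
    simp only [κ, Complex.add_im, Complex.ofReal_im, add_zero]
    split_ifs with h
    · rw [← hper (-Complex.I * (τ + c)) (by simpa [rightHalfPlane] using h)]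
      ring_nf
    · rfl
  have hrot : Tendsto (-Complex.I * ·) (comap Complex.im atTop) (comap Complex.re atTop) :=
    tendsto_comap_iff.2 (tendsto_comap.congr fun τ ↦ (hre τ).symm)
  have hmem : ∀ᶠ τ in comap Complex.im atTop, h₀ < τ.im :=
    tendsto_comap.eventually (eventually_gt_atTop h₀)
  have hne : ∀ᶠ τ in comap Complex.im atTop, γ (-Complex.I * τ) ≠ 0 :=
    (hlim.comp hrot).eventually (Bornology.eventually_ne_cobounded 0)
  have hzero : ZeroAtFilter (comap Complex.im atTop) κ :=
    (tendsto_inv₀_cobounded.comp (hlim.comp hrot)).congr' (hmem.mono fun τ hτ ↦ (hκ τ hτ).symm)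
  have hhol : ∀ᶠ τ in comap Complex.im atTop, DifferentiableAt ℂ κ τ := by
    filter_upwards [hmem, hne] with τ hτ hτne
    have hd : DifferentiableAt ℂ γ (-Complex.I * τ) :=
      hγ.differentiableAt ((isOpen_rightHalfPlane h₀).mem_nhds (hτ.trans_eq (hre τ).symm))
    refine ((hd.comp τ (differentiableAt_id.const_mul _)).inv hτne).congr_of_eventuallyEq ?_
    filter_upwards [(isOpen_lt continuous_const Complex.continuous_im).mem_nhds hτ] using hκ
  have : (comap Complex.im atTop).NeBot := atTop_neBot.comap_of_surj Complex.im_surjective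
  obtain ⟨C, hC⟩ := exists_eventually_exp_mul_norm_le_of_periodic hc hκper hhol hzero
    ((hmem.and hne).mono fun τ hτ ↦ (hκ τ hτ.1).trans_ne (inv_ne_zero hτ.2)).frequently h₀
  refine ⟨C, ((tendsto_inv₀_cobounded'.eventually hC).and
    (Bornology.eventually_ne_cobounded 0)).mono ?_⟩
  rintro z ⟨⟨τ, hτ, hτz, hbound⟩, hz⟩
  refine ⟨-Complex.I * τ, hτ.trans_eq (hre τ).symm, inv_inj.1 ((hκ τ hτ).symm.trans hτz), ?_⟩
  rwa [hre, ← mul_inv_le_iff₀ (norm_pos_iff.2 hz), ← norm_inv]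

theorem tendsto_cobounded_of_lift_exp (hf : Continuous f)
    (hfγ : ∀ ζ ∈ rightHalfPlane h₀, f (γ ζ) = Complex.exp ζ) :
    Tendsto γ (comap Complex.re atTop) (Bornology.cobounded ℂ) := by
  rw [Metric.cobounded_eq_cocompact]
  refine hasBasis_cocompact.tendsto_right_iff.2 fun K hK ↦ ?_
  obtain ⟨B, hB⟩ := hK.exists_bound_of_continuousOn hf.continuousOn
  filter_upwards [tendsto_comap.eventually (eventually_gt_atTop h₀),
    tendsto_comap.eventually (Real.tendsto_exp_atTop.eventually_gt_atTop B)] with ζ hζ hBζ hK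
  have := hB (γ ζ) hK
  rw [hfγ ζ hζ, Complex.norm_exp] at this
  linarith

theorem not_periodic_of_lift_exp (hf : TranscendentalEntire f)
    (hγ : DifferentiableOn ℂ γ (rightHalfPlane h₀))
    (hfγ : ∀ ζ ∈ rightHalfPlane h₀, f (γ ζ) = Complex.exp ζ) {m : ℕ} (hm : 0 < m) :
    ¬ ∀ ζ ∈ rightHalfPlane h₀, γ (ζ + m * (2 * Real.pi * Complex.I)) = γ ζ := by
  intro hper
  have hm' : (0 : ℝ) < m := Nat.cast_pos.2 hm
  obtain ⟨C, hC⟩ := exists_eventually_exp_le_mul_norm_of_periodic (c := m * (2 * Real.pi))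
    (by positivity) hγ (fun ζ hζ ↦ by rw [← hper ζ hζ]; push_cast; ring_nf)
    (tendsto_cobounded_of_lift_exp hf.1.continuous hfγ)
  obtain ⟨ρ, -, hρ⟩ := hasBasis_cobounded_norm.eventually_iff.1 hC
  refine hf.2 (exists_polynomial_of_norm_le_mul_pow hf.1 (C := C ^ m) (ρ := ρ) (m := m)
    fun z hz ↦ ?_)
  obtain ⟨ζ, hζ, rfl, hexp⟩ := hρ hz
  rw [mul_comm (m : ℝ), mul_div_mul_left _ _ Real.two_pi_pos.ne'] at hexp
  calc ‖f (γ ζ)‖ = Real.exp (ζ.re / m) ^ m := by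
        rw [hfγ ζ hζ, Complex.norm_exp, ← Real.exp_nat_mul, mul_div_cancel₀ _ hm'.ne']
    _ ≤ C ^ m * ‖γ ζ‖ ^ m := by
        rw [← mul_pow]
        gcongr

/-- By uniqueness of lifts, `γ x = γ y` for some `x ≠ y` would make `γ` periodic. -/
theorem injOn_of_lift_exp (hf : TranscendentalEntire f)
    (hcov : IsCoveringMapOn f {z | Real.exp h₀ < ‖z‖})
    (hγ : DifferentiableOn ℂ γ (rightHalfPlane h₀))
    (hfγ : ∀ ζ ∈ rightHalfPlane h₀, f (γ ζ) = Complex.exp ζ) :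
    InjOn γ (rightHalfPlane h₀) := by
  have hne : ∀ a ∈ rightHalfPlane h₀, ∀ m : ℕ, 0 < m →
      γ (a + m * (2 * Real.pi * Complex.I)) ≠ γ a := by
    intro a ha m hm heq
    have hmem : ∀ ζ ∈ rightHalfPlane h₀,
        ζ + m * (2 * Real.pi * Complex.I) ∈ rightHalfPlane h₀ := fun ζ hζ ↦ by
      simpa [rightHalfPlane] using hζ
    have hfγ' : ∀ ζ ∈ rightHalfPlane h₀,
        f (γ (ζ + m * (2 * Real.pi * Complex.I))) = Complex.exp ζ := fun ζ hζ ↦ by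
      rw [hfγ _ (hmem ζ hζ), Complex.exp_periodic.nat_mul m ζ]
    refine not_periodic_of_lift_exp hf hγ hfγ hm (eqOn_of_comp_eqOn hcov
      (convex_rightHalfPlane h₀).isPreconnected (hγ.continuousOn.comp (by fun_prop) hmem)
      hγ.continuousOn (fun ζ hζ ↦ ?_) (fun ζ hζ ↦ ?_) ha heq)
    · simpa [hfγ' ζ hζ] using exp_lt_norm_exp_iff.2 hζ
    · simp [hfγ' ζ hζ, hfγ ζ hζ]
  intro x hx y hy hxy
  obtain ⟨n, hn⟩ := Complex.exp_eq_exp_iff_exists_int.1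
    (show Complex.exp x = Complex.exp y by rw [← hfγ x hx, ← hfγ y hy, hxy])
  obtain ⟨m, rfl | rfl⟩ := n.eq_nat_or_neg
  · obtain rfl | hm := m.eq_zero_or_pos
    · simpa using hn
    · exact absurd (by rw [← hxy, hn, Int.cast_natCast]) (hne y hy m hm)
  · obtain rfl | hm := m.eq_zero_or_pos
    · simpa using hn
    · exact absurd (by rw [hxy, hn]; simp) (hne x hx m hm)

end LiftsOfExp

section LogarithmicCoordinates

/-- The setting of the logarithmic change of variable `z = exp ζ` over `{|z| > exp h₀}`: there `f`
has no singular values, and `f 0` lies outside, so that inverse branches of `f` have logarithms. -/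
structure HasLogCoordinates (f : ℂ → ℂ) (h₀ : ℝ) : Prop where
  transcendentalEntire : TranscendentalEntire f
  isCoveringMapOn : IsCoveringMapOn f {z | Real.exp h₀ < ‖z‖}
  norm_map_zero_le : ‖f 0‖ ≤ Real.exp h₀

/-- An inverse branch of `f` over `{|z| > exp h₀}` expressed in logarithmic coordinates. -/
structure IsLogInverseBranch (f : ℂ → ℂ) (h₀ : ℝ) (G : ℂ → ℂ) : Prop where
  differentiableOn : DifferentiableOn ℂ G (rightHalfPlane h₀)
  map_exp : ∀ ζ ∈ rightHalfPlane h₀, f (Complex.exp (G ζ)) = Complex.exp ζ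

variable {f G : ℂ → ℂ} {h₀ : ℝ}

theorem HasLogCoordinates.exists_isLogInverseBranch (hf : HasLogCoordinates f h₀) {ζ₀ η₀ : ℂ}
    (hζ₀ : ζ₀ ∈ rightHalfPlane h₀) (h : f (Complex.exp η₀) = Complex.exp ζ₀) :
    ∃ G, IsLogInverseBranch f h₀ G ∧ G ζ₀ = η₀ := by
  obtain ⟨γ, hγ, hγ₀, hfγ⟩ := exists_holomorphic_lift hf.transcendentalEntire.1 hf.isCoveringMapOn
    (isOpen_rightHalfPlane h₀) (convex_rightHalfPlane h₀)
    Complex.differentiable_exp.differentiableOn (fun _ ↦ exp_lt_norm_exp_iff.2) hζ₀ h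
  have hne : ∀ ζ ∈ rightHalfPlane h₀, γ ζ ≠ 0 := fun ζ hζ h0 ↦ by
    have hf0 : f 0 = Complex.exp ζ := h0 ▸ hfγ hζ
    exact absurd hf.norm_map_zero_le (not_le.2 (hf0 ▸ exp_lt_norm_exp_iff.2 hζ))
  obtain ⟨G, hG, hG₀, hexpG⟩ := exists_holomorphic_log (isOpen_rightHalfPlane h₀)
    (convex_rightHalfPlane h₀) hγ hne hζ₀ hγ₀.symm
  have hmap : EqOn (f ∘ Complex.exp ∘ G) Complex.exp (rightHalfPlane h₀) :=
    (hexpG.comp_left (g := f)).trans hfγ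
  exact ⟨G, ⟨hG, hmap⟩, hG₀⟩

namespace IsLogInverseBranch

theorem injOn_exp (hG : IsLogInverseBranch f h₀ G) (hf : HasLogCoordinates f h₀) :
    InjOn (fun ζ ↦ Complex.exp (G ζ)) (rightHalfPlane h₀) :=
  injOn_of_lift_exp hf.transcendentalEntire hf.isCoveringMapOn hG.differentiableOn.cexp hG.map_exp

/-- The **Eremenko–Lyubich expansion estimate**, stated for the inverse branch. -/
theorem norm_deriv_mul_le (hG : IsLogInverseBranch f h₀ G) (hf : HasLogCoordinates f h₀) {ζ : ℂ}
    (hζ : ζ ∈ rightHalfPlane h₀) : ‖deriv G ζ‖ * (ζ.re - h₀) ≤ 400 := by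
  have hsub : ball ζ (ζ.re - h₀) ⊆ rightHalfPlane h₀ := ball_subset_rightHalfPlane (by linarith)
  refine norm_deriv_mul_le_of_ne_add_two_pi_I (sub_pos.2 hζ) (hG.differentiableOn.mono hsub)
    fun x hx y hy hxy ↦ ?_
  have hxy' : x = y := hG.injOn_exp hf (hsub hx) (hsub hy) (by
    simp only [hxy]
    exact Complex.exp_periodic _)
  rw [hxy'] at hxy
  exact Complex.two_pi_I_ne_zero (left_eq_add.1 hxy)

theorem norm_deriv_le (hG : IsLogInverseBranch f h₀ G) (hf : HasLogCoordinates f h₀) {t : ℝ}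
    (ht : 0 < t) {ζ : ℂ} (hζ : h₀ + t ≤ ζ.re) : ‖deriv G ζ‖ ≤ 400 / t := by
  rw [le_div_iff₀ ht]
  calc ‖deriv G ζ‖ * t ≤ ‖deriv G ζ‖ * (ζ.re - h₀) := by gcongr; linarith
    _ ≤ 400 := hG.norm_deriv_mul_le hf (show h₀ < ζ.re by linarith)

theorem eqOn_comp (hG : IsLogInverseBranch f h₀ G) (hf : HasLogCoordinates f h₀) {U : Set ℂ}
    (hU : IsPreconnected U) {φ ψ : ℂ → ℂ} (hφ : ContinuousOn φ U) (hψ : ContinuousOn ψ U)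
    (hmaps : MapsTo φ U (rightHalfPlane h₀))
    (hfψ : ∀ y ∈ U, f (Complex.exp (ψ y)) = Complex.exp (φ y)) {c : ℂ} (hc : c ∈ U)
    (hGc : G (φ c) = ψ c) : EqOn (G ∘ φ) ψ U := by
  have hGφ : ContinuousOn (G ∘ φ) U := hG.differentiableOn.continuousOn.comp hφ hmaps
  refine eqOn_of_comp_eqOn Complex.isCoveringMapOn_exp hU hGφ hψ
    (fun y _ ↦ Complex.exp_ne_zero _) ?_ hc hGc
  refine eqOn_of_comp_eqOn hf.isCoveringMapOn hU hGφ.cexp hψ.cexp (fun y hy ↦ ?_) (fun y hy ↦ ?_)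
    hc (congrArg Complex.exp hGc)
  · exact (exp_lt_norm_exp_iff.2 (hmaps hy)).trans_eq (congrArg norm (hG.map_exp _ (hmaps hy)).symm)
  · exact (hG.map_exp _ (hmaps hy)).trans (hfψ y hy).symm

end IsLogInverseBranch

end LogarithmicCoordinates

section EscapingPoints

variable {f : ℂ → ℂ} {h₀ : ℝ}

theorem TranscendentalEntire.isOpenMap (hf : TranscendentalEntire f) : IsOpenMap f := by
  have hana : AnalyticOnNhd ℂ f univ := hf.1.differentiableOn.analyticOnNhd isOpen_univ
  refine hana.is_constant_or_isOpenMap.resolve_left fun ⟨w, hw⟩ ↦ hf.2 ⟨Polynomial.C w, fun z ↦ ?_⟩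
  simp [hw]

theorem isOpenMap_iterate {X : Type*} [TopologicalSpace X] {g : X → X} (hg : IsOpenMap g) (n : ℕ) :
    IsOpenMap g^[n] := by
  induction n with
  | zero => exact IsOpenMap.id
  | succ n ih => exact ih.comp hg

namespace HasLogCoordinates

variable {c : ℂ} {r : ℝ}

/-- Here `ψ` and `φ` are logarithms of consecutive iterates of `f`. -/
theorem norm_deriv_log_le (hf : HasLogCoordinates f h₀) (hr : 0 < r) {φ ψ : ℂ → ℂ}
    (hψ : DifferentiableOn ℂ ψ (ball c r)) (hφ : DifferentiableOn ℂ φ (ball c r))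
    (hfψ : ∀ y ∈ ball c r, f (Complex.exp (ψ y)) = Complex.exp (φ y))
    (hφre : ∀ y ∈ ball c r, h₀ + 800 < (φ y).re) :
    ‖deriv ψ c‖ ≤ 1 / 2 * ‖deriv φ c‖ ∧ ‖deriv ψ c‖ ≤ 400 / r := by
  have hc := mem_ball_self (x := c) hr
  have hmaps : MapsTo φ (ball c r) (rightHalfPlane h₀) := fun y hy ↦
    (lt_add_of_pos_right h₀ (by norm_num)).trans (hφre y hy)
  obtain ⟨G, hG, hGc⟩ := hf.exists_isLogInverseBranch (hmaps hc) (hfψ c hc)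
  have heq : EqOn (G ∘ φ) ψ (ball c r) := hG.eqOn_comp hf (convex_ball c r).isPreconnected
    hφ.continuousOn hψ.continuousOn hmaps hfψ hc hGc
  constructor
  · have hchain : deriv ψ c = deriv G (φ c) * deriv φ c := by
      rw [← (heq.eventuallyEq_of_mem (isOpen_ball.mem_nhds hc)).deriv_eq]
      exact deriv_comp c
        (hG.differentiableOn.differentiableAt ((isOpen_rightHalfPlane h₀).mem_nhds (hmaps hc)))
        (hφ.differentiableAt (isOpen_ball.mem_nhds hc))
    rw [hchain, norm_mul]
    gcongr
    exact (hG.norm_deriv_le hf (by norm_num) (hφre c hc).le).trans_eq (by norm_num)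
  · rw [le_div_iff₀ hr]
    refine norm_deriv_mul_le_of_ne_add_two_pi_I hr hψ fun x hx y hy hxy ↦ ?_
    have hexp : Complex.exp (ψ x) = Complex.exp (ψ y) := by rw [hxy, Complex.exp_periodic]
    rw [← heq hx, ← heq hy] at hexp
    have hφxy : φ x = φ y := hG.injOn_exp hf (hmaps hx) (hmaps hy) hexp
    rw [← heq hx, ← heq hy, Function.comp_apply, Function.comp_apply, hφxy] at hxy
    exact Complex.two_pi_I_ne_zero (left_eq_add.1 hxy)

/-- Otherwise the derivatives at `c` of the logarithms `ψ n` of the iterates would be uniformly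
bounded, yet at least double in modulus at each step. Hence `ψ 0` would have derivative `0`, but it
is a logarithm of the identity. -/
theorem exists_norm_iterate_le (hf : HasLogCoordinates f h₀) (c : ℂ) (hr : 0 < r) :
    ∃ y ∈ ball c r, ∃ n, ‖f^[n] y‖ ≤ Real.exp (h₀ + 800) := by
  by_contra! hlarge
  have hc := mem_ball_self (x := c) hr
  have hne : ∀ n, ∀ y ∈ ball c r, f^[n] y ≠ 0 := fun n y hy ↦
    norm_pos_iff.1 ((Real.exp_pos _).trans (hlarge y hy n))
  choose ψ hψ _ hexp using fun n ↦ exists_holomorphic_log isOpen_ball (convex_ball c r)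
    (hf.transcendentalEntire.1.iterate n).differentiableOn (hne n) hc (Complex.exp_log (hne n c hc))
  have hexp' : ∀ n, ∀ y ∈ ball c r, Complex.exp (ψ n y) = f^[n] y := fun n y hy ↦ hexp n hy
  have hstep n : ‖deriv (ψ n) c‖ ≤ 1 / 2 * ‖deriv (ψ (n + 1)) c‖ ∧ ‖deriv (ψ n) c‖ ≤ 400 / r := by
    refine hf.norm_deriv_log_le hr (hψ n) (hψ (n + 1)) (fun y hy ↦ ?_) fun y hy ↦ ?_
    · rw [hexp' n y hy, hexp' (n + 1) y hy, Function.iterate_succ_apply']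
    · exact exp_lt_norm_exp_iff.1 (by rw [hexp' (n + 1) y hy]; exact hlarge y hy (n + 1))
  have hpow (n : ℕ) : ‖deriv (ψ 0) c‖ ≤ (1 / 2) ^ n * ‖deriv (ψ n) c‖ := by
    induction n with
    | zero => simp
    | succ n ih =>
      rw [pow_succ, mul_assoc]
      exact ih.trans (by gcongr; exact (hstep n).1)
  have hlim : Tendsto (fun n : ℕ ↦ (1 / 2 : ℝ) ^ n * (400 / r)) atTop (𝓝 0) := by
    simpa using (tendsto_pow_atTop_nhds_zero_of_lt_one (r := (1 / 2 : ℝ)) (by norm_num)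
      (by norm_num)).mul_const (400 / r)
  have hzero : deriv (ψ 0) c = 0 := norm_le_zero_iff.1 (ge_of_tendsto' hlim fun n ↦
    (hpow n).trans (by gcongr; exact (hstep n).2))
  have hderiv : HasDerivAt id (Complex.exp (ψ 0 c) * deriv (ψ 0) c) c :=
    ((hψ 0).differentiableAt (isOpen_ball.mem_nhds hc)).hasDerivAt.cexp.congr_of_eventuallyEq
      ((hexp 0).symm.eventuallyEq_of_mem (isOpen_ball.mem_nhds hc))
  rw [hzero, mul_zero] at hderiv
  exact zero_ne_one (hderiv.unique (hasDerivAt_id c))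

theorem not_tendsto_norm_iterate (hf : HasLogCoordinates f h₀) {W : Set ℂ} {w : ℂ} (hW : W ∈ 𝓝 w)
    (hdisj : Pairwise (Function.onFun Disjoint fun n ↦ f^[n] '' W)) :
    ¬ Tendsto (fun n ↦ ‖f^[n] w‖) atTop atTop := by
  intro hlim
  obtain ⟨r, hr, hrW⟩ := Metric.mem_nhds_iff.1 hW
  obtain ⟨ρ, hρ, hev⟩ := exists_eventually_forall_mem_ball_lt_norm (F := fun n ↦ f^[n + 1])
    (a := w) hr hr (fun n ↦ (hf.transcendentalEntire.1.iterate _).differentiableOn)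
    (fun n z hz hmem ↦ disjoint_left.1 (hdisj n.succ_ne_zero) (mem_image_of_mem _ (hrW hz))
      ⟨_, hrW hmem, rfl⟩)
    (hlim.comp (tendsto_add_atTop_nat 1)) (Real.exp (h₀ + 800))
  obtain ⟨N, hN⟩ := eventually_atTop.1 hev
  obtain ⟨δ, hδ, hsub⟩ := Metric.isOpen_iff.1
    (isOpenMap_iterate hf.transcendentalEntire.isOpenMap (N + 1) _ isOpen_ball) _
    (mem_image_of_mem _ (mem_ball_self hρ))
  obtain ⟨y, hy, n, hn⟩ := hf.exists_norm_iterate_le (f^[N + 1] w) hδ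
  obtain ⟨x, hx, rfl⟩ := hsub hy
  rw [← Function.iterate_add_apply, ← add_assoc] at hn
  exact absurd hn (not_le.2 (hN (n + N) (Nat.le_add_left N n) x hx))

end HasLogCoordinates

end EscapingPoints

section Orbits

variable {E : Type*} [NormedAddCommGroup E] {f : E → E}

theorem exists_forall_norm_iterate_le (hf : Continuous f) {K : Set E} (hK : IsCompact K) (J : ℕ) :
    ∃ B, ∀ i ≤ J, ∀ z ∈ K, ‖f^[i] z‖ ≤ B := by
  have hbdd : Bornology.IsBounded (⋃ i ∈ Iic J, f^[i] '' K) :=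
    (Bornology.isBounded_biUnion (finite_Iic J)).2 fun i _ ↦ (hK.image (hf.iterate i)).isBounded
  obtain ⟨B, hB⟩ := hbdd.exists_norm_le
  exact ⟨B, fun i hi z hz ↦ hB _ (mem_biUnion hi (mem_image_of_mem _ hz))⟩

theorem exists_forall_norm_iterate_le_of_mapsTo (hf : Continuous f) {K : Set E} (hK : IsCompact K)
    {n : ℕ} (hn : 0 < n) (hmaps : MapsTo f^[n] K K) {w : E} (hw : w ∈ K) :
    ∃ B, ∀ m, ‖f^[m] w‖ ≤ B := by
  obtain ⟨B, hB⟩ := exists_forall_norm_iterate_le hf hK n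
  refine ⟨B, fun m ↦ ?_⟩
  rw [← Nat.mod_add_div m n, Function.iterate_add_apply, Function.iterate_mul]
  exact hB _ (Nat.mod_lt _ hn).le _ (hmaps.iterate (m / n) hw)

/-- An excursion of length `J + 1` of the orbit of `v`: the points `v, f v, …, f^J v` lie outside
the disc of radius `L`, and the next point lies in it. -/
def IsExcursion (f : E → E) (L : ℝ) (J : ℕ) (v : E) : Prop :=
  (∀ i ≤ J, L < ‖f^[i] v‖) ∧ ‖f^[J + 1] v‖ ≤ L

/-- An orbit point of sufficiently large norm is not reached from the disc in `J + 1` steps, so the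
first return to the disc after it ends an excursion. -/
theorem frequently_isExcursion [ProperSpace E] (hf : Continuous f) {L : ℝ} {w : E}
    (hfreq : ∃ᶠ n in atTop, ‖f^[n] w‖ ≤ L) (hunb : ∀ B : ℝ, ∃ᶠ n in atTop, B < ‖f^[n] w‖) (J : ℕ) :
    ∃ᶠ m in atTop, IsExcursion f L J (f^[m] w) := by
  classical
  obtain ⟨B, hB⟩ := exists_forall_norm_iterate_le hf (isCompact_closedBall (0 : E) L) (J + 1)
  refine frequently_atTop.2 fun n₁ ↦ ?_
  obtain ⟨k, hk, hkB⟩ := frequently_atTop.1 (hunb B) (n₁ + (J + 1))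
  have hex := frequently_atTop.1 hfreq k
  obtain ⟨hkn, hnL⟩ := Nat.find_spec hex
  have hmin : ∀ n, n < Nat.find hex → k ≤ n → L < ‖f^[n] w‖ := fun n hn hkn ↦
    not_le.1 fun hle ↦ Nat.find_min hex hn ⟨hkn, hle⟩
  obtain ⟨m, hm⟩ := Nat.exists_eq_add_of_le' (Nat.le_of_add_left_le (hk.trans hkn))
  rw [hm] at hkn hnL hmin
  refine ⟨m, by omega, fun i hi ↦ ?_, ?_⟩
  · rw [← Function.iterate_add_apply, add_comm i]
    obtain hki | hik := le_or_gt k (m + i)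
    · exact hmin _ (by omega) hki
    · by_contra! hle
      have hkB' := hB (k - (m + i)) (by omega) _ (mem_closedBall_zero_iff.2 hle)
      rw [← Function.iterate_add_apply, Nat.sub_add_cancel hik.le] at hkB'
      exact absurd hkB (not_lt.2 hkB')
  · rwa [← Function.iterate_add_apply, add_comm]

end Orbits

section Sequences

variable {X : Type*} [PseudoMetricSpace X] {x : ℕ → X} {ρ : ℝ}

theorem exists_tendsto_of_frequently_mem_thickening {S : Set X} (hS : IsCompact S) {u : ℕ → ℝ}
    (h : ∀ ε > 0, ∀ M, ∃ᶠ n in atTop, M ≤ u n ∧ x n ∈ thickening ε S) :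
    ∃ s ∈ S, ∃ n : ℕ → ℕ, Tendsto n atTop atTop ∧ Tendsto (x ∘ n) atTop (𝓝 s) ∧
      Tendsto (u ∘ n) atTop atTop := by
  have h' : ∀ k : ℕ, ∃ n ≥ k, k ≤ u n ∧ ∃ s ∈ S, dist (x n) s < 1 / ((k : ℝ) + 1) := fun k ↦ by
    simpa only [mem_thickening_iff] using
      frequently_atTop.1 (h (1 / ((k : ℝ) + 1)) (by positivity) k) k
  choose n hkn hu s hs hdist using h'
  obtain ⟨s₀, hs₀, φ, hφ, hlim⟩ := hS.tendsto_subseq hs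
  have hdist0 : Tendsto (fun k ↦ dist (s (φ k)) (x (n (φ k)))) atTop (𝓝 0) :=
    squeeze_zero (fun _ ↦ dist_nonneg) (fun k ↦ (dist_comm _ _).trans_le (hdist (φ k)).le)
      (tendsto_one_div_add_atTop_nhds_zero_nat.comp hφ.tendsto_atTop)
  exact ⟨s₀, hs₀, n ∘ φ, tendsto_atTop_mono (fun k ↦ hkn (φ k)) hφ.tendsto_atTop,
    hlim.congr_dist hdist0, tendsto_atTop_mono (fun k ↦ hu (φ k))
      (tendsto_natCast_atTop_atTop.comp hφ.tendsto_atTop)⟩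

theorem not_frequently_ball_subset_of_pairwise_disjoint {K : Set X} (hK : IsCompact K) (hρ : 0 < ρ)
    {A : ℕ → Set X} (hA : Pairwise (Function.onFun Disjoint A)) (hx : ∀ n, x n ∈ A n) :
    ¬ ∃ᶠ n in atTop, x n ∈ K ∧ ball (x n) ρ ⊆ A n := by
  intro h
  obtain ⟨φ, hφ, hφA⟩ := extraction_of_frequently_atTop h
  obtain ⟨p, -, θ, hθ, hlim⟩ := hK.tendsto_subseq fun n ↦ (hφA n).1
  obtain ⟨N, hN⟩ := Metric.cauchySeq_iff.1 hlim.cauchySeq ρ hρ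
  exact disjoint_left.1 (hA ((hφ.comp hθ).injective.ne N.succ_ne_self).symm)
    ((hφA (θ N)).2 (hN (N + 1) N.le_succ N le_rfl)) (hx _)

end Sequences

section PullBack

variable {f : ℂ → ℂ} {S : Set ℂ} {h₀ : ℝ}

theorem sub_le_re_of_norm_sub_le {s t : ℝ} {ζ ξ : ℂ} (hξ : Real.exp t ≤ ‖Complex.exp ξ‖)
    (h : ‖ζ - ξ‖ ≤ s) : t - s ≤ ζ.re := by
  rw [Complex.norm_exp, Real.exp_le_exp] at hξ
  have hre := (abs_le.1 ((Complex.abs_re_le_norm _).trans h)).1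
  rw [Complex.sub_re] at hre
  linarith

theorem exists_log_inverse_on_ball (hf : Differentiable ℂ f) (hcov : IsCoveringMapOn f Sᶜ)
    {v a : ℂ} {ε : ℝ} (hε : 0 < ε) (hS : ball (f v) ε ⊆ Sᶜ) (hv : v ≠ 0)
    (ha : f a ∉ ball (f v) ε) (hav : ‖a‖ ≤ ‖v‖) :
    ∃ ψ : ℂ → ℂ, DifferentiableOn ℂ ψ (ball (f v) (ε / 12800)) ∧ Complex.exp (ψ (f v)) = v ∧
      (∀ z ∈ ball (f v) (ε / 12800), ‖ψ z - ψ (f v)‖ ≤ 1) ∧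
      LeftInvOn f (fun z ↦ Complex.exp (ψ z)) (ball (f v) (ε / 12800)) := by
  obtain ⟨Φ, hΦ, hΦv, hfΦ⟩ := exists_holomorphic_lift hf hcov isOpen_ball (convex_ball (f v) ε)
    differentiableOn_id hS (mem_ball_self hε) (show f v = id (f v) from rfl)
  have hleft : LeftInvOn f Φ (ball (f v) ε) := hfΦ
  obtain ⟨ψ, hψ, hexp⟩ := exists_log_of_injOn_of_omits hε hΦ hleft.injOn (a := a)
    (fun z hz hza ↦ ha (by rw [← hza, hleft hz]; exact hz)) (by rwa [hΦv]) (by rwa [hΦv])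
  refine ⟨ψ, hψ, (hexp _ (mem_ball_self (by positivity))).1.trans hΦv, fun z hz ↦ (hexp z hz).2,
    fun z hz ↦ ?_⟩
  simp only [(hexp z hz).1]
  exact hleft (ball_subset_ball (by linarith) hz)

/-- The last step of the excursion is inverted by bounded distortion, and the earlier ones by
inverse branches in logarithmic coordinates, which do not expand. -/
theorem HasLogCoordinates.exists_log_inverse_iterate (hf : HasLogCoordinates f h₀)
    (hcov : IsCoveringMapOn f Sᶜ) {L ε : ℝ} {a x : ℂ} (hL : Real.exp (h₀ + 401) ≤ L) (hε : 0 < ε)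
    (hS : ball x ε ⊆ Sᶜ) (haL : ‖a‖ ≤ L) (ha : f a ∉ ball x ε) {j : ℕ} {v : ℂ}
    (hv : ∀ i ≤ j, L < ‖f^[i] v‖) (hvx : f^[j + 1] v = x) :
    ∃ ψ : ℂ → ℂ, DifferentiableOn ℂ ψ (ball x (ε / 12800)) ∧ Complex.exp (ψ x) = v ∧
      (∀ z ∈ ball x (ε / 12800), ‖ψ z - ψ x‖ ≤ 1) ∧
      LeftInvOn f^[j + 1] (fun z ↦ Complex.exp (ψ z)) (ball x (ε / 12800)) := by
  have hv0 : L < ‖v‖ := hv 0 j.zero_le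
  have hvne : v ≠ 0 := norm_pos_iff.1 ((Real.exp_pos _).trans_le (hL.trans hv0.le))
  induction j generalizing v with
  | zero =>
    obtain rfl : f v = x := hvx
    exact exists_log_inverse_on_ball hf.transcendentalEntire.1 hcov hε hS hvne ha (haL.trans hv0.le)
  | succ j ih =>
    have hfv : L < ‖f v‖ := hv 1 (by omega)
    obtain ⟨φ, hφ, hφx, hφ1, hφinv⟩ := ih (v := f v) (fun i hi ↦ hv (i + 1) (by omega)) hvx hfv
      (norm_pos_iff.1 ((Real.exp_pos _).trans_le (hL.trans hfv.le)))
    have hx := mem_ball_self (x := x) (show 0 < ε / 12800 by positivity)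
    have hre : MapsTo φ (ball x (ε / 12800)) {ζ | h₀ + 400 ≤ ζ.re} := fun z hz ↦ by
      have := sub_le_re_of_norm_sub_le (by rw [hφx]; exact hL.trans hfv.le) (hφ1 z hz)
      change h₀ + 400 ≤ _
      linarith
    have hsub : {ζ : ℂ | h₀ + 400 ≤ ζ.re} ⊆ rightHalfPlane h₀ := fun ζ hζ ↦
      (lt_add_of_pos_right h₀ (by norm_num)).trans_le hζ
    obtain ⟨G, hG, hGx⟩ := hf.exists_isLogInverseBranch (hsub (hre hx)) (η₀ := Complex.log v)
      (by rw [Complex.exp_log hvne, hφx])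
    have hcontr : ∀ z ∈ ball x (ε / 12800), ‖G (φ z) - G (φ x)‖ ≤ ‖φ z - φ x‖ := fun z hz ↦ by
      simpa using (convex_halfSpace_re_ge (h₀ + 400)).norm_image_sub_le_of_norm_deriv_le
        (fun ζ hζ ↦ hG.differentiableOn.differentiableAt
          ((isOpen_rightHalfPlane h₀).mem_nhds (hsub hζ)))
        (fun ζ hζ ↦ hG.norm_deriv_le hf (by norm_num) hζ) (hre hx) (hre hz)
    refine ⟨G ∘ φ, hG.differentiableOn.comp hφ (hre.mono_right hsub), ?_,
      fun z hz ↦ (hcontr z hz).trans (hφ1 z hz), fun z hz ↦ ?_⟩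
    · rw [Function.comp_apply, hGx, Complex.exp_log hvne]
    · have hfG : f (Complex.exp (G (φ z))) = Complex.exp (φ z) := hG.map_exp _ (hsub (hre hz))
      simp only [Function.iterate_succ_apply _ (j + 1), Function.comp_apply, hfG]
      exact hφinv hz

theorem exists_inverse_iterate_of_notMem_postsingularSet (hf : Differentiable ℂ f)
    (hcov : IsCoveringMapOn f Sᶜ) {U : Set ℂ} (hUo : IsOpen U) (hUc : Convex ℝ U) {u : ℂ → ℂ}
    (hu : DifferentiableOn ℂ u U) (huP : ∀ z ∈ U, u z ∉ PostsingularSet f S) {x v : ℂ} (hx : x ∈ U)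
    {k : ℕ} (hv : f^[k] v = u x) :
    ∃ Φ : ℂ → ℂ, DifferentiableOn ℂ Φ U ∧ Φ x = v ∧ EqOn (f^[k] ∘ Φ) u U := by
  induction k generalizing v with
  | zero => exact ⟨u, hu, hv.symm, fun _ _ ↦ rfl⟩
  | succ k ih =>
    obtain ⟨Φ, hΦ, hΦx, hfΦ⟩ := ih hv
    have hmaps : MapsTo Φ U Sᶜ := fun z hz hzS ↦ huP z hz (by
      rw [← hfΦ hz]
      exact subset_closure (mem_iUnion.2 ⟨k, mem_image_of_mem _ hzS⟩))
    obtain ⟨Ψ, hΨ, hΨx, hfΨ⟩ := exists_holomorphic_lift hf hcov hUo hUc hΦ hmaps hx hΦx.symm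
    exact ⟨Ψ, hΨ, hΨx, (hfΨ.comp_left (g := f^[k])).trans hfΦ⟩

theorem exists_forall_exists_notMem_ball (hf : IsOpenMap f) {L : ℝ} (hL : 0 < L) :
    ∃ ε > 0, ∀ x, ∃ a ∈ closedBall 0 L, f a ∉ ball x ε := by
  obtain ⟨δ, hδ, hsub⟩ := Metric.isOpen_iff.1 (hf _ isOpen_ball) _
    (mem_image_of_mem f (mem_ball_self (x := (0 : ℂ)) hL))
  refine ⟨δ / 4, by positivity, fun x ↦ ?_⟩
  by_contra! hcon
  have hdist : dist (f 0 + (δ / 2 : ℝ)) (f 0) = δ / 2 := by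
    simp [abs_of_pos hδ]
  obtain ⟨b, hb, hfb⟩ := hsub (mem_ball.2 (hdist.trans_lt (half_lt_self hδ)))
  have h0 := mem_ball.1 (hcon 0 (mem_closedBall_self hL.le))
  have hb' := mem_ball.1 (hcon b (ball_subset_closedBall hb))
  rw [← hfb] at hdist
  linarith [dist_triangle_right (f b) (f 0) x]

theorem ball_subset_image_of_leftInvOn {F Φ : ℂ → ℂ} {x a : ℂ} {r ρ δ : ℝ} (hr : 0 < r)
    (hΦ : DifferentiableOn ℂ Φ (ball x r)) (hF : LeftInvOn F Φ (ball x r))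
    (ha : ∀ z ∈ ball x r, Φ z ≠ a) (hρr : 800 * ρ ≤ r) (hρδ : 1600 * ρ * ‖Φ x - a‖ ≤ δ * r) :
    ball x ρ ⊆ F '' ball (Φ x) δ := by
  intro z hz
  have hzρ := mem_ball.1 hz
  have hzr : z ∈ ball x r := mem_ball.2 (by linarith [dist_nonneg (x := z) (y := x)])
  have hpos : 0 < ‖Φ x - a‖ := norm_pos_iff.2 (sub_ne_zero.2 (ha x (mem_ball_self hr)))
  refine ⟨Φ z, mem_ball_iff_norm.2 ?_, hF hzr⟩
  calc ‖Φ z - Φ x‖ ≤ 1600 * (dist z x / r) * ‖Φ x - a‖ :=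
        norm_sub_le_of_injOn_of_omits hr hΦ hF.injOn ha (by linarith)
    _ < 1600 * (ρ / r) * ‖Φ x - a‖ := by gcongr
    _ = 1600 * ρ * ‖Φ x - a‖ / r := by ring
    _ ≤ δ := (div_le_iff₀ hr).2 hρδ

/-- If every point of the disc were taken by `Φ`, then `f^[n]` would map the disc into itself. -/
theorem exists_forall_ne_of_leftInvOn (hf : Continuous f) {w : ℂ} {Φ : ℂ → ℂ} {U : Set ℂ} {B : ℝ}
    {n : ℕ} (hn : 0 < n) (hunb : ∀ C, ∃ m, C < ‖f^[m] w‖) (hw : ‖w‖ ≤ B) (hU : U ⊆ closedBall 0 B)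
    (hΦ : LeftInvOn f^[n] Φ U) : ∃ a ∈ closedBall 0 B, ∀ z ∈ U, Φ z ≠ a := by
  by_contra! hcon
  have hmaps : MapsTo f^[n] (closedBall 0 B) (closedBall 0 B) := fun a ha ↦ by
    obtain ⟨z, hz, rfl⟩ := hcon a ha
    rw [hΦ hz]
    exact hU hz
  obtain ⟨C, hC⟩ := exists_forall_norm_iterate_le_of_mapsTo hf (isCompact_closedBall 0 B) hn hmaps
    (mem_closedBall_zero_iff.2 hw)
  obtain ⟨m, hm⟩ := hunb C
  exact absurd (hC m) (not_le.2 hm)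

/-- The disc pulled back along the excursion avoids the postsingular set, because the large points
of that set are still outside the disc of radius `L + 2` after `J + 1` steps. -/
theorem HasLogCoordinates.exists_inverse_iterate_of_isExcursion (hf : HasLogCoordinates f h₀)
    (hcov : IsCoveringMapOn f Sᶜ) {L ε : ℝ} {a w : ℂ} {J m : ℕ} (hL : Real.exp (h₀ + 401) ≤ L)
    (hP : ∀ z ∈ PostsingularSet f S, Real.exp h₀ ≤ ‖z‖ → L + 2 ≤ ‖f^[J + 1] z‖)
    (hexc : IsExcursion f L J (f^[m] w)) (hε : 0 < ε) (hε1 : ε ≤ 1)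
    (hS : ball (f^[J + 1 + m] w) ε ⊆ Sᶜ) (haL : ‖a‖ ≤ L) (ha : f a ∉ ball (f^[J + 1 + m] w) ε) :
    ∃ Φ : ℂ → ℂ, DifferentiableOn ℂ Φ (ball (f^[J + 1 + m] w) (ε / 12800)) ∧
      Φ (f^[J + 1 + m] w) = w ∧
      LeftInvOn f^[J + 1 + m] Φ (ball (f^[J + 1 + m] w) (ε / 12800)) := by
  obtain ⟨ψ, hψ, hψx, hψ1, hψinv⟩ := hf.exists_log_inverse_iterate hcov hL hε hS haL ha hexc.1
    (Function.iterate_add_apply f (J + 1) m w).symm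
  have havoid : ∀ z ∈ ball (f^[J + 1 + m] w) (ε / 12800),
      Complex.exp (ψ z) ∉ PostsingularSet f S := by
    intro z hz hzP
    have hre := sub_le_re_of_norm_sub_le
      (by rw [hψx]; exact hL.trans (hexc.1 0 J.zero_le).le) (hψ1 z hz)
    have hlarge := hP _ hzP (by
      rw [Complex.norm_exp, Real.exp_le_exp]
      linarith)
    rw [hψinv hz] at hlarge
    have hret : ‖f^[J + 1 + m] w‖ ≤ L := (Function.iterate_add_apply f (J + 1) m w) ▸ hexc.2
    linarith [norm_le_norm_add_norm_sub' z (f^[J + 1 + m] w), mem_ball_iff_norm.1 hz]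
  obtain ⟨Φ, hΦ, hΦx, hfΦ⟩ := exists_inverse_iterate_of_notMem_postsingularSet
    hf.transcendentalEntire.1 hcov isOpen_ball (convex_ball _ _) hψ.cexp havoid
    (mem_ball_self (by positivity)) hψx.symm
  refine ⟨Φ, hΦ, hΦx, fun z hz ↦ ?_⟩
  have hm : f^[m] (Φ z) = Complex.exp (ψ z) := hfΦ hz
  rw [Function.iterate_add_apply, hm]
  exact hψinv hz

theorem HasLogCoordinates.exists_ball_subset_image_of_isExcursion (hf : HasLogCoordinates f h₀)
    (hcov : IsCoveringMapOn f Sᶜ) {L ε : ℝ} {J : ℕ} {w : ℂ} {W : Set ℂ}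
    (hL : Real.exp (h₀ + 401) ≤ L)
    (hP : ∀ z ∈ PostsingularSet f S, Real.exp h₀ ≤ ‖z‖ → L + 2 ≤ ‖f^[J + 1] z‖) (hε : 0 < ε)
    (hW : W ∈ 𝓝 w) (hwL : ‖w‖ ≤ L) (hunb : ∀ B, ∃ n, B < ‖f^[n] w‖) :
    ∃ ρ > 0, ∀ m, IsExcursion f L J (f^[m] w) → ball (f^[J + 1 + m] w) ε ⊆ Sᶜ →
      ball (f^[J + 1 + m] w) ρ ⊆ f^[J + 1 + m] '' W := by
  have hL0 : 0 < L := (Real.exp_pos _).trans_le hL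
  obtain ⟨δ, hδ, hδW⟩ := Metric.mem_nhds_iff.1 hW
  obtain ⟨ε₀, hε₀, hnonconst⟩ :=
    exists_forall_exists_notMem_ball hf.transcendentalEntire.isOpenMap hL0
  obtain ⟨η, hη, hη1, hηε, hηε₀⟩ : ∃ η, 0 < η ∧ η ≤ 1 ∧ η ≤ ε ∧ η ≤ ε₀ :=
    ⟨min 1 (min ε ε₀), by positivity, by simp⟩
  obtain ⟨ρ, hρ, hρη, hρδ⟩ : ∃ ρ, 0 < ρ ∧ ρ ≤ η / 12800 / 800 ∧
      ρ ≤ δ * (η / 12800) / (1600 * (2 * L + 1)) :=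
    ⟨min (η / 12800 / 800) (δ * (η / 12800) / (1600 * (2 * L + 1))), by positivity, by simp⟩
  rw [le_div_iff₀ (by positivity)] at hρδ
  refine ⟨ρ, hρ, fun m hexc hS ↦ ?_⟩
  obtain ⟨b, hbL, hb⟩ := hnonconst (f^[J + 1 + m] w)
  obtain ⟨Φ, hΦ, hΦx, hinv⟩ := hf.exists_inverse_iterate_of_isExcursion hcov hL hP hexc hη hη1
    ((ball_subset_ball hηε).trans hS) (mem_closedBall_zero_iff.1 hbL)
    fun h ↦ hb (ball_subset_ball hηε₀ h)
  have hU : ball (f^[J + 1 + m] w) (η / 12800) ⊆ closedBall 0 (L + 1) := fun z hz ↦ by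
    have hret : ‖f^[J + 1 + m] w‖ ≤ L := Function.iterate_add_apply f (J + 1) m w ▸ hexc.2
    rw [mem_closedBall_zero_iff]
    linarith [norm_le_norm_add_norm_sub' z (f^[J + 1 + m] w), mem_ball_iff_norm.1 hz]
  obtain ⟨a, haL, ha⟩ := exists_forall_ne_of_leftInvOn hf.transcendentalEntire.1.continuous
    (by omega) hunb (hwL.trans (by linarith)) hU hinv
  have hwa : ‖Φ (f^[J + 1 + m] w) - a‖ ≤ 2 * L + 1 := by
    rw [hΦx]
    linarith [norm_sub_le w a, mem_closedBall_zero_iff.1 haL]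
  refine (ball_subset_image_of_leftInvOn (by positivity) hΦ hinv ha (by linarith) ?_).trans
    (image_mono (hΦx.symm ▸ hδW))
  calc 1600 * ρ * ‖Φ (f^[J + 1 + m] w) - a‖ ≤ 1600 * ρ * (2 * L + 1) := by gcongr
    _ ≤ δ * (η / 12800) := by linarith

end PullBack

section WanderingDomains

variable {f : ℂ → ℂ} {S : Set ℂ}

theorem isOpen_fatouSet (f : ℂ → ℂ) : IsOpen (FatouSet f) :=
  isOpen_iff_mem_nhds.2 fun _ ⟨N, hN, hz, h⟩ ↦
    mem_of_superset (hN.mem_nhds hz) fun _ hx ↦ ⟨N, hN, hx, h⟩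

theorem IsWanderingDomain.isOpen {W : Set ℂ} (hW : IsWanderingDomain f W) : IsOpen W := by
  obtain ⟨⟨z, -, rfl⟩, -⟩ := hW
  exact (isOpen_fatouSet f).connectedComponentIn

theorem IsWanderingDomain.pairwise_disjoint {W : Set ℂ} (hW : IsWanderingDomain f W) :
    Pairwise (Function.onFun Disjoint fun n ↦ f^[n] '' W) :=
  fun m n hmn ↦ disjoint_iff_inter_eq_empty.2 (hW.2 m n hmn)

theorem TranscendentalEntire.exists_hasLogCoordinates (hf : TranscendentalEntire f)
    (hS : Bornology.IsBounded S) (hcov : IsCoveringMapOn f Sᶜ) (R : ℝ) :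
    ∃ h₀, HasLogCoordinates f h₀ ∧ R ≤ Real.exp h₀ := by
  obtain ⟨B, hB⟩ := hS.exists_norm_le
  obtain ⟨h₀, hR, hB', hf0⟩ : ∃ h₀, R ≤ h₀ ∧ B ≤ h₀ ∧ ‖f 0‖ ≤ h₀ :=
    ⟨max R (max B ‖f 0‖), by simp⟩
  have hexp : h₀ ≤ Real.exp h₀ := by linarith [Real.add_one_le_exp h₀]
  exact ⟨h₀, ⟨hf, hcov.mono fun z hz hzS ↦ (((hB z hzS).trans hB').trans hexp).not_gt hz,
    hf0.trans hexp⟩, hR.trans hexp⟩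

theorem exists_forall_ball_subset_compl_of_not_accumulates {E : Type*} [SeminormedAddCommGroup E]
    {f : E → E} {S : Set E} (hS : IsCompact S) {w : E}
    (hcon : ¬ ∃ s ∈ S, ∃ n : ℕ → ℕ, Tendsto n atTop atTop ∧ (∀ k, 1 ≤ n k) ∧
      Tendsto (fun k ↦ f^[n k] w) atTop (𝓝 s) ∧
      Tendsto (fun k ↦ ‖f^[n k - 1] w‖) atTop atTop) :
    ∃ ε > 0, ∃ M, ∀ᶠ n in atTop, M ≤ ‖f^[n] w‖ → ball (f^[n + 1] w) ε ⊆ Sᶜ := by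
  contrapose! hcon
  have hthick : ∀ ε > 0, ∀ M, ∃ᶠ n in atTop, M ≤ ‖f^[n] w‖ ∧ f^[n + 1] w ∈ thickening ε S :=
    fun ε hε M ↦ (hcon ε hε M).mono fun n hn ↦ by
      obtain ⟨s, hs, hsS⟩ := not_subset.1 hn.2
      exact ⟨hn.1, mem_thickening_iff.2 ⟨s, not_notMem.1 hsS, mem_ball'.1 hs⟩⟩
  obtain ⟨s, hs, n, hn, hlim, hunb⟩ := exists_tendsto_of_frequently_mem_thickening hS hthick
  exact ⟨s, hs, fun k ↦ n k + 1, (tendsto_add_atTop_nat 1).comp hn,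
    fun k ↦ Nat.le_add_left 1 (n k), hlim, hunb⟩

theorem wandering_accumulates_on_singular_value_general (hf : TranscendentalEntire f)
    (hS : IsCompact S) (hcov : IsCoveringMapOn f Sᶜ) {R : ℝ}
    (hesc : ∀ M : ℝ, ∃ N : ℕ, ∀ n ≥ N, ∀ z ∈ PostsingularSet f S, R ≤ ‖z‖ → M ≤ ‖f^[n] z‖)
    {W : Set ℂ} {w : ℂ} (hW : W ∈ 𝓝 w)
    (hdisj : Pairwise (Function.onFun Disjoint fun n ↦ f^[n] '' W))
    (hunb : ∀ B : ℝ, ∃ᶠ n in atTop, B < ‖f^[n] w‖) :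
    ∃ s ∈ S, ∃ n : ℕ → ℕ, Tendsto n atTop atTop ∧ (∀ k, 1 ≤ n k) ∧
      Tendsto (fun k ↦ f^[n k] w) atTop (𝓝 s) ∧
      Tendsto (fun k ↦ ‖f^[n k - 1] w‖) atTop atTop := by
  by_contra hcon
  obtain ⟨ε, hε, M, hsep⟩ := exists_forall_ball_subset_compl_of_not_accumulates hS hcon
  obtain ⟨h₀, hlog, hR⟩ := hf.exists_hasLogCoordinates hS.isBounded hcov R
  obtain ⟨L₀, hL₀⟩ : ∃ L₀, ∃ᶠ n in atTop, ‖f^[n] w‖ < L₀ := by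
    simpa [tendsto_atTop_atTop, frequently_atTop] using hlog.not_tendsto_norm_iterate hW hdisj
  obtain ⟨L, hexpL, hML, hL₀L, hwL⟩ : ∃ L, Real.exp (h₀ + 401) ≤ L ∧ M ≤ L ∧ L₀ ≤ L ∧ ‖w‖ ≤ L :=
    ⟨max (Real.exp (h₀ + 401)) (max M (max L₀ ‖w‖)), by simp⟩
  obtain ⟨J, hJ⟩ := hesc (L + 2)
  obtain ⟨ρ, hρ, hball⟩ := hlog.exists_ball_subset_image_of_isExcursion hcov hexpL
    (fun z hz hzR ↦ hJ (J + 1) J.le_succ z hz (hR.trans hzR)) hε hW hwL fun B ↦ (hunb B).exists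
  have hexc := frequently_isExcursion hf.1.continuous (hL₀.mono fun n hn ↦ hn.le.trans hL₀L) hunb J
  have hsepJ := (tendsto_add_atTop_nat J).eventually hsep
  refine not_frequently_ball_subset_of_pairwise_disjoint (isCompact_closedBall 0 L) hρ hdisj
    (fun n ↦ mem_image_of_mem _ (mem_of_mem_nhds hW)) <|
    (tendsto_add_atTop_nat (J + 1)).frequently ((hexc.and_eventually hsepJ).mono ?_)
  rintro m ⟨hexc, hsep⟩
  have hadd (i : ℕ) : f^[i] (f^[m] w) = f^[m + i] w := by
    rw [add_comm, Function.iterate_add_apply]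
  have hSm : ball (f^[m + (J + 1)] w) ε ⊆ Sᶜ :=
    hsep (hML.trans ((hadd J) ▸ hexc.1 J le_rfl).le)
  rw [add_comm] at hSm ⊢
  exact ⟨mem_closedBall_zero_iff.2 (Function.iterate_add_apply f (J + 1) m w ▸ hexc.2),
    hball m hexc hSm⟩

end WanderingDomains

/-- **Theorem (Statement 9).** Let `f ∈ B`, and assume the iterates of `f` tend to infinity
uniformly on `{z ∈ P(f) : |z| ≥ R}` for some `R > 0`. If `W` is a wandering domain of `f`
for which `∞` is a limit function and `w ∈ W`, then there are `s ∈ S(f)` and a sequence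
`n_k → ∞` with `f^{n_k}(w) → s` and `f^{n_k − 1}(w) → ∞`. -/
theorem wandering_accumulates_on_singular_value
    (f : ℂ → ℂ) (S : Set ℂ)
    (hf : TranscendentalEntire f)
    (hS : IsSingularValueSet f S)
    (hSbdd : Bornology.IsBounded S)
    (R : ℝ) (hR : 0 < R)
    (hesc : ∀ M : ℝ, ∃ N : ℕ, ∀ n ≥ N, ∀ z ∈ PostsingularSet f S, R ≤ ‖z‖ → M ≤ ‖f^[n] z‖)
    (W : Set ℂ) (hW : IsWanderingDomain f W)
    (w : ℂ) (hw : w ∈ W)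
    (hinf : ∃ m : ℕ → ℕ, Tendsto m atTop atTop ∧
      Tendsto (fun j => ‖f^[m j] w‖) atTop atTop) :
    ∃ s ∈ S, ∃ n : ℕ → ℕ, Tendsto n atTop atTop ∧ (∀ k, 1 ≤ n k) ∧
      Tendsto (fun k => f^[n k] w) atTop (𝓝 s) ∧
      Tendsto (fun k => ‖f^[n k - 1] w‖) atTop atTop := by
  obtain ⟨m, hm, hlim⟩ := hinf
  exact wandering_accumulates_on_singular_value_general hf
    (isCompact_of_isClosed_isBounded hS.1 hSbdd) hS.2.1 hesc (hW.isOpen.mem_nhds hw)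
    hW.pairwise_disjoint fun B ↦ hm.frequently (hlim.eventually_gt_atTop B).frequently
end

section
/- Let f ∈ B_ℝ and σ ∈ Σ₀(f). Then f satisfies the sector condition at σ∞ if and only if there exist constants r, K > 0 such that |f′(σx)|/|f(σx)| ≤ K · log|f(σx)| / x for all x ≥ r. -/
/-!
Formalization of: "Absence of wandering domains for functions in class B whose
singular values escape uniformly, under a thickness condition along an invariant set A."
-/

open Set Metric Filter Topology

/-- `f` satisfies the (real) sector condition at `σ∞`: for all sufficiently large `R > 0`
there are `ϑ > 0` and `R' > 0` with `|f(σx + y)| > R` whenever `x > R'` and `|y| < ϑx`. -/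
def SectorCondAt (f : ℂ → ℂ) (σ : ℝ) : Prop :=
  ∃ R₀ > (0 : ℝ), ∀ R ≥ R₀, ∃ ϑ > (0 : ℝ), ∃ R' > (0 : ℝ), ∀ x : ℝ, R' < x →
    ∀ y : ℂ, ‖y‖ < ϑ * x → R < ‖f ((σ * x : ℝ) + y)‖

/-!
If `|f| > 1` on discs of radius `ϑx` about the points `σx`, then `log f` has positive real part
there, and the Borel–Carathéodory inequality bounds its derivative at the centre by
`2 log|f(σx)| / (ϑx)`.

For the converse, let `{|w| > R}` contain no singular value. Then `exp` on `{Re ζ > log R}` lifts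
through `f` to a holomorphic map `F` with `f ∘ F = exp`. By uniqueness of lifts, `F` is either
injective or periodic with an imaginary period. In the periodic case the image of `F` contains a
neighbourhood of infinity, so `|f| > R` near infinity. In the injective case, a Koebe
estimate on the disc about `log f(c)` of radius `log|f(c)| - log R` shows that `|f| > R` on a disc
about `c` of radius comparable to `(log|f(c)| - log R) |f(c)| / |f'(c)|`; at `c = σx` the
hypothesis on the logarithmic derivative makes this radius comparable to `x`. A Koebe estimate
with a non-sharp constant suffices: if `F` omits `a` but not the disc about `F(c)` of radius
`|F(c) - a|`, then the square root of `(F - a) / (F(c) - a)` stays away from `-1`.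
-/

section InverseBranches

theorem isSimplyConnected_of_convex {E : Type*} [AddCommGroup E] [Module ℝ E] [TopologicalSpace E]
    [ContinuousAdd E] [ContinuousSMul ℝ E] {s : Set E} (hs : Convex ℝ s) (hne : s.Nonempty) :
    IsSimplyConnected s :=
  have := hs.contractibleSpace hne
  (inferInstance : SimplyConnectedSpace s)

theorem hasStrictDerivAt_of_comp_eventuallyEq {𝕜 : Type*} [NontriviallyNormedField 𝕜]
    [CompleteSpace 𝕜] {f F h : 𝕜 → 𝕜} {f' h' z : 𝕜} (hF : ContinuousAt F z)
    (hf : HasStrictDerivAt f f' (F z)) (hf' : f' ≠ 0) (hh : HasStrictDerivAt h h' z)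
    (hfF : f ∘ F =ᶠ[𝓝 z] h) : HasStrictDerivAt F (f'⁻¹ * h') z := by
  have hinv := hf.to_localInverse hf'
  rw [show f (F z) = h z from hfF.self_of_nhds] at hinv
  refine (hinv.comp z hh).congr_of_eventuallyEq ?_
  filter_upwards [hF.eventually (hf.eventually_left_inverse hf'), hfF] with w hw hfw
  rwa [Function.comp_apply, ← hfw]

-- Critical points of `f` are isolated, so `F` is holomorphic off a discrete set, and
-- continuity makes the remaining singularities removable.
theorem analyticAt_of_comp_eventuallyEq {f F h : ℂ → ℂ} {z : ℂ} (hf : AnalyticAt ℂ f (F z))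
    (hh : AnalyticAt ℂ h z) (hconst : ¬ ∀ᶠ w in 𝓝 z, h w = h z)
    (hF : ∀ᶠ w in 𝓝 z, ContinuousAt F w) (hfF : f ∘ F =ᶠ[𝓝 z] h) : AnalyticAt ℂ F z := by
  have hFz := hF.self_of_nhds
  have hfz : f (F z) = h z := hfF.self_of_nhds
  have hh_ne : ∀ᶠ w in 𝓝[≠] z, h w ≠ h z :=
    (hh.eventually_eq_or_eventually_ne analyticAt_const).resolve_left hconst
  have hf' : ∀ᶠ w in 𝓝[≠] F z, deriv f w ≠ 0 := by
    refine hf.deriv.eventually_eq_zero_or_eventually_ne_zero.resolve_left fun h0 => hconst ?_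
    obtain ⟨ε, hε, hball⟩ := eventually_nhds_iff_ball.1 (h0.and hf.eventually_analyticAt)
    filter_upwards [hFz (ball_mem_nhds _ hε), hfF] with w hw hfw
    rw [← hfw, ← hfz]
    exact isOpen_ball.is_const_of_deriv_eq_zero (convex_ball _ _).isPreconnected
      (fun v hv => (hball v hv).2.differentiableAt.differentiableWithinAt)
      (fun v hv => (hball v hv).1) hw (mem_ball_self hε)
  have hF_ne : Tendsto F (𝓝[≠] z) (𝓝[≠] F z) := by
    refine tendsto_nhdsWithin_iff.2 ⟨hFz.tendsto.mono_left nhdsWithin_le_nhds, ?_⟩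
    filter_upwards [hh_ne, hfF.filter_mono nhdsWithin_le_nhds] with w hw hfw hFw
    rw [← hfw, Function.comp_apply, show F w = F z from hFw, hfz] at hw
    exact hw rfl
  refine Complex.analyticAt_of_differentiable_on_punctured_nhds_of_continuousAt ?_ hFz
  have hsmall := (hF.and (hfF.eventuallyEq_nhds.and
    ((hFz.eventually hf.eventually_analyticAt).and hh.eventually_analyticAt))).filter_mono
    (nhdsWithin_le_nhds (s := {z}ᶜ))
  filter_upwards [hF_ne.eventually hf', hsmall] with w hw ⟨hFw, hfFw, hfw, hhw⟩
  exact (hasStrictDerivAt_of_comp_eventuallyEq hFw hfw.hasStrictDerivAt hw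
    hhw.hasStrictDerivAt hfFw).hasDerivAt.differentiableAt

variable {g : ℂ → ℂ} {c : ℂ} {r : ℝ}

theorem exists_hasDerivAt_logDeriv_ball (hr : 0 < r) (hg : DifferentiableOn ℂ g (ball c r))
    (hg₀ : ∀ z ∈ ball c r, g z ≠ 0) :
    ∃ l : ℂ → ℂ, ∀ z ∈ ball c r, Complex.exp (l z) = g z ∧ HasDerivAt l (logDeriv g z) z := by
  obtain ⟨l, hl, hexp⟩ := Complex.exists_continuousOn_eqOn_exp_comp
    (isSimplyConnected_of_convex (convex_ball c r) ⟨c, mem_ball_self hr⟩) isOpen_ball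
    hg.continuousOn (by rintro ⟨z, hz, h⟩; exact hg₀ z hz h)
  refine ⟨l, fun z hz => ⟨hexp hz, ?_⟩⟩
  have hnhds : ball c r ∈ 𝓝 z := isOpen_ball.mem_nhds hz
  have h := hasStrictDerivAt_of_comp_eventuallyEq (hl.continuousAt hnhds)
    (Complex.hasStrictDerivAt_exp (l z)) (Complex.exp_ne_zero _)
    (hg.analyticAt hnhds).hasStrictDerivAt (hexp.eventuallyEq_of_mem hnhds)
  rw [show Complex.exp (l z) = g z from hexp hz, inv_mul_eq_div] at h
  exact h.hasDerivAt

theorem exists_differentiableOn_sq_eq (hr : 0 < r) (hg : DifferentiableOn ℂ g (ball c r))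
    (hg₀ : ∀ z ∈ ball c r, g z ≠ 0) {w : ℂ} (hw : w ^ 2 = g c) :
    ∃ h : ℂ → ℂ, DifferentiableOn ℂ h (ball c r) ∧ (∀ z ∈ ball c r, h z ^ 2 = g z) ∧ h c = w := by
  obtain ⟨l, hl⟩ := exists_hasDerivAt_logDeriv_ball hr hg hg₀
  have hc := mem_ball_self (x := c) hr
  refine ⟨fun z => w * Complex.exp ((l z - l c) / 2), fun z hz => ?_, fun z hz => ?_, by simp⟩
  · exact ((((hl z hz).2.sub_const (l c)).div_const 2).cexp.const_mul w).differentiableAt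
      |>.differentiableWithinAt
  · rw [mul_pow, hw, ← Complex.exp_nat_mul, Nat.cast_ofNat, mul_div_cancel₀ _ two_ne_zero,
      Complex.exp_sub, (hl z hz).1, (hl c hc).1, mul_div_cancel₀ _ (hg₀ c hc)]

end InverseBranches

section DerivativeEstimates

variable {g : ℂ → ℂ} {c : ℂ} {r : ℝ}

theorem norm_deriv_le_of_re_pos (hr : 0 < r) (hg : DifferentiableOn ℂ g (ball c r))
    (hre : ∀ z ∈ ball c r, 0 < (g z).re) : ‖deriv g c‖ ≤ 2 * (g c).re / r := by
  have hc := mem_ball_self (x := c) hr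
  have hbound : ∀ z ∈ ball c r, ‖g z - g c‖ ≤ 2 * (g c).re * ‖z - c‖ / (r - ‖z - c‖) := by
    intro z hz
    have hadd : MapsTo (c + ·) (ball 0 r) (ball c r) := fun w hw => by simpa using hw
    have hbc := Complex.borelCaratheodory_zero (f := fun w => g c - g (c + w)) (z := z - c)
      (hre c hc) ((differentiableOn_const _).sub (hg.comp (by fun_prop) hadd))
      (fun w hw => by simpa using (hre _ (hadd hw)).le) hr
      (by simpa [dist_eq_norm] using hz) (by simp)
    simpa [norm_sub_rev] using hbc
  have hslope := (hasDerivAt_iff_tendsto_slope.1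
    (hg.differentiableAt (isOpen_ball.mem_nhds hc)).hasDerivAt).norm
  have hlim : Tendsto (fun z => 2 * (g c).re / (r - ‖z - c‖)) (𝓝[≠] c) (𝓝 (2 * (g c).re / r)) := by
    have : ContinuousAt (fun z => 2 * (g c).re / (r - ‖z - c‖)) c :=
      ContinuousAt.div (by fun_prop) (by fun_prop) (by simpa using hr.ne')
    simpa using this.tendsto.mono_left nhdsWithin_le_nhds
  refine le_of_tendsto_of_tendsto hslope hlim ?_
  filter_upwards [self_mem_nhdsWithin, mem_nhdsWithin_of_mem_nhds (isOpen_ball.mem_nhds hc)]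
    with z hzc hz
  rw [slope_def_field, norm_div, div_le_iff₀ (norm_pos_iff.2 (sub_ne_zero.2 hzc)),
    div_mul_eq_mul_div]
  exact hbound z hz

theorem norm_logDeriv_le_of_one_lt_norm (hr : 0 < r) (hg : DifferentiableOn ℂ g (ball c r))
    (h1 : ∀ z ∈ ball c r, 1 < ‖g z‖) : ‖logDeriv g c‖ ≤ 2 * Real.log ‖g c‖ / r := by
  obtain ⟨l, hl⟩ := exists_hasDerivAt_logDeriv_ball hr hg
    fun z hz => norm_pos_iff.1 (one_pos.trans (h1 z hz))
  have hre : ∀ z ∈ ball c r, (l z).re = Real.log ‖g z‖ := fun z hz => by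
    rw [← (hl z hz).1, Complex.norm_exp, Real.log_exp]
  have hc := mem_ball_self (x := c) hr
  rw [← (hl c hc).2.deriv, ← hre c hc]
  exact norm_deriv_le_of_re_pos hr
    (fun z hz => (hl z hz).2.differentiableAt.differentiableWithinAt)
    fun z hz => hre z hz ▸ Real.log_pos (h1 z hz)

theorem norm_deriv_le_of_forall_le_norm_sub {w : ℂ} {ρ : ℝ} (hr : 0 < r)
    (hg : DifferentiableOn ℂ g (ball c r)) (hρ : 0 < ρ) (hw : ∀ z ∈ ball c r, ρ ≤ ‖g z - w‖) :
    ‖deriv g c‖ ≤ 2 * ‖g c - w‖ ^ 2 / (ρ * r) := by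
  have hc := mem_ball_self (x := c) hr
  have hne : ∀ z ∈ ball c r, g z - w ≠ 0 := fun z hz => norm_pos_iff.1 (hρ.trans_le (hw z hz))
  have hinv : ∀ z ∈ ball c r, ‖(g z - w)⁻¹‖ ≤ ρ⁻¹ := fun z hz => by
    rw [norm_inv]
    exact inv_anti₀ hρ (hw z hz)
  have hschwarz := Complex.norm_deriv_le_div_of_mapsTo_ball (f := fun z => (g z - w)⁻¹)
    (R₂ := 2 * ρ⁻¹) ((hg.sub_const w).inv hne)
    (fun z hz => mem_closedBall_iff_norm.2 <|
      (norm_sub_le _ _).trans <| by linarith [hinv z hz, hinv c hc]) hr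
  have hderiv := (((hg.differentiableAt (isOpen_ball.mem_nhds hc)).hasDerivAt.sub_const w).inv
    (hne c hc)).deriv
  have hpos : 0 < ‖g c - w‖ ^ 2 := pow_pos (norm_pos_iff.2 (hne c hc)) 2
  rw [show deriv (fun z => (g z - w)⁻¹) c = _ from hderiv, norm_div, norm_neg, norm_pow,
    div_le_iff₀ hpos] at hschwarz
  exact hschwarz.trans_eq (by field_simp)

end DerivativeEstimates

section Koebe

variable {F q : ℂ → ℂ} {U B : Set ℂ} {c : ℂ} {r : ℝ}

theorem isOpen_image_of_injOn (hU : IsOpen U) (hF : DifferentiableOn ℂ F U) (hinj : InjOn F U) :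
    IsOpen (F '' U) := by
  refine isOpen_iff_mem_nhds.2 ?_
  rintro _ ⟨z, hz, rfl⟩
  have hUz := hU.mem_nhds hz
  rcases (hF.analyticAt hUz).eventually_constant_or_nhds_le_map_nhds with hconst | hopen
  · obtain ⟨w, ⟨hw, hwU⟩, hwz⟩ := (((hconst.and hUz).filter_mono nhdsWithin_le_nhds).and
      (self_mem_nhdsWithin (s := {z}ᶜ))).exists
    exact absurd (hinj hwU hz hw) hwz
  · exact hopen (image_mem_map hUz)

theorem isPreconnected_inter_preimage_of_injOn (hU : IsOpen U) (hF : DifferentiableOn ℂ F U)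
    (hinj : InjOn F U) (hB : IsPreconnected B) (hBU : B ⊆ F '' U) :
    IsPreconnected (U ∩ F ⁻¹' B) := by
  have hopen : IsOpenMap (U.domRestrict F) := fun s hs => by
    have hs' := hU.isOpenMap_subtype_val s hs
    have hsU : Subtype.val '' s ⊆ U := by simp
    have h := isOpen_image_of_injOn hs' (hF.mono hsU) (hinj.mono hsU)
    rwa [image_image] at h
  have h := (hB.preimage_of_isOpenMap hinj.injective hopen (by rwa [range_domRestrict])).image
    Subtype.val continuous_subtype_val.continuousOn
  convert h using 1
  ext z
  simp [domRestrict_apply, and_comm]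

theorem re_pos_of_isPreconnected_of_sq_re_pos {W : Set ℂ} (hW : IsPreconnected W)
    (hF : ContinuousOn F W) (hsq : ∀ z ∈ W, 0 < (F z ^ 2).re) (hc : c ∈ W) (hFc : 0 < (F c).re) :
    ∀ z ∈ W, 0 < (F z).re := by
  intro z hz
  by_contra! hneg
  obtain ⟨v, hv, hv0⟩ := hW.intermediate_value hz hc (Complex.continuous_re.comp_continuousOn hF)
    ⟨hneg, hFc.le⟩
  have hv0 : (F v).re = 0 := hv0
  have := hsq v hv
  simp only [sq, Complex.mul_re, hv0] at this
  nlinarith [mul_self_nonneg (F v).im]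

theorem norm_deriv_le_of_injOn_of_ball_subset_image (hr : 0 < r)
    (hq : DifferentiableOn ℂ q (ball c r)) (hinj : InjOn q (ball c r))
    (hq₀ : ∀ z ∈ ball c r, q z ≠ 0) (hqc : q c = 1) (hsub : ball 1 1 ⊆ q '' ball c r) :
    ‖deriv q c‖ ≤ 40 / r := by
  have hc := mem_ball_self (x := c) hr
  obtain ⟨G, hG, hGsq, hGc⟩ := exists_differentiableOn_sq_eq hr hq hq₀ (w := 1) (by simp [hqc])
  have hre : ∀ z ∈ ball c r ∩ q ⁻¹' ball 1 1, 0 < (G z).re := by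
    refine re_pos_of_isPreconnected_of_sq_re_pos (c := c)
      (isPreconnected_inter_preimage_of_injOn isOpen_ball hq hinj
        (convex_ball 1 1).isPreconnected hsub)
      (hG.continuousOn.mono inter_subset_left) (fun z hz => ?_) ⟨hc, by simp [hqc]⟩ (by simp [hGc])
    have h := (Complex.re_le_norm _).trans_lt (mem_ball_iff_norm'.1 hz.2)
    rw [hGsq z hz.1]
    simpa using h
  -- If `G z` is close to `-1`, then `q z = G z ^ 2` is in `ball 1 1`, so `0 < (G z).re`.
  have hfar : ∀ z ∈ ball c r, 2 / 5 ≤ ‖G z - -1‖ := by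
    intro z hz
    rw [sub_neg_eq_add]
    by_contra! hlt
    have hmem : q z ∈ ball 1 1 := by
      rw [mem_ball_iff_norm', ← hGsq z hz,
        show 1 - G z ^ 2 = (G z + 1) * (2 - (G z + 1)) by ring, norm_mul]
      have h2 : ‖2 - (G z + 1)‖ ≤ 2 + ‖G z + 1‖ := (norm_sub_le _ _).trans (by simp)
      nlinarith [norm_nonneg (G z + 1)]
    have h := (Complex.re_le_norm (G z + 1)).trans_lt hlt
    rw [Complex.add_re, Complex.one_re] at h
    linarith [hre z ⟨hz, hmem⟩]
  have hGder := (hG.differentiableAt (isOpen_ball.mem_nhds hc)).hasDerivAt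
  have hder : deriv q c = 2 * deriv G c := by
    have h := (hGder.fun_pow 2).congr_of_eventuallyEq
      (Filter.eventuallyEq_of_mem (isOpen_ball.mem_nhds hc) fun z hz => (hGsq z hz).symm)
    simpa [hGc] using h.deriv
  have hle := norm_deriv_le_of_forall_le_norm_sub hr hG (by norm_num : (0 : ℝ) < 2 / 5) hfar
  rw [hder, norm_mul, Complex.norm_ofNat]
  refine (mul_le_mul_of_nonneg_left hle zero_le_two).trans_eq ?_
  rw [hGc, sub_neg_eq_add, one_add_one_eq_two, Complex.norm_ofNat]
  field_simp
  norm_num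

theorem ball_subset_image_of_injOn (hr : 0 < r) (hF : DifferentiableOn ℂ F (ball c r))
    (hinj : InjOn F (ball c r)) : ball (F c) (r * ‖deriv F c‖ / 40) ⊆ F '' ball c r := by
  have hc := mem_ball_self (x := c) hr
  have hopen := isOpen_image_of_injOn isOpen_ball hF hinj
  rcases (F '' ball c r)ᶜ.eq_empty_or_nonempty with huniv | hne
  · simp [compl_empty_iff.1 huniv]
  obtain ⟨a, ha, hdist⟩ := hopen.isClosed_compl.exists_infDist_eq_dist hne (F c)
  have hball : ball (F c) ‖F c - a‖ ⊆ F '' ball c r := by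
    simpa [hdist, dist_eq_norm] using ball_infDist_compl_subset (x := F c) (s := F '' ball c r)
  refine (ball_subset_ball ?_).trans hball
  have hsub : F c - a ≠ 0 := sub_ne_zero.2 fun h => ha ⟨c, hc, h⟩
  have hpos : 0 < ‖F c - a‖ := norm_pos_iff.2 hsub
  have hle := norm_deriv_le_of_injOn_of_ball_subset_image hr
    (q := fun z => (F z - a) / (F c - a)) ((hF.sub_const a).div_const _)
    (fun z hz w hw h => hinj hz hw (by simpa [div_left_inj' hsub] using h))
    (fun z hz => div_ne_zero (sub_ne_zero.2 fun h => ha ⟨z, hz, h⟩) hsub) (div_self hsub)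
    fun w hw => ?_
  · rw [deriv_div_const, deriv_sub_const, norm_div, div_le_div_iff₀ hpos hr] at hle
    linarith
  · obtain ⟨z, hz, hzw⟩ := hball (a := a + w * (F c - a)) <| by
      rw [mem_ball_iff_norm, show a + w * (F c - a) - F c = (w - 1) * (F c - a) by ring, norm_mul]
      exact mul_lt_of_lt_one_left hpos (mem_ball_iff_norm.1 hw)
    exact ⟨z, hz, by simp [hzw, hsub]⟩

end Koebe

section ExpLifts

theorem isPreconnected_setOf_lt_norm {M : ℝ} (hM : 0 < M) : IsPreconnected {z : ℂ | M < ‖z‖} := by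
  have himage : Complex.exp '' {ζ | Real.log M < ζ.re} = {z : ℂ | M < ‖z‖} := by
    ext z
    refine ⟨?_, fun hz => ?_⟩
    · rintro ⟨ζ, hζ, rfl⟩
      simpa [Complex.norm_exp, ← Real.log_lt_iff_lt_exp hM] using hζ
    · have hz : M < ‖z‖ := hz
      exact ⟨Complex.log z, by simpa [Complex.log_re] using Real.log_lt_log hM hz,
        Complex.exp_log (norm_pos_iff.1 (hM.trans hz))⟩
  rw [← himage]
  exact (convex_halfSpace_re_gt _).isPreconnected.image _ Complex.continuous_exp.continuousOn

theorem exists_continuousOn_lift_of_convex {E X Y : Type*} [NormedAddCommGroup E] [NormedSpace ℝ E]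
    [TopologicalSpace X] [TopologicalSpace Y] {f : X → Y} {e : E → Y} {T : Set Y} {U : Set E}
    {a : E} {x : X} (hcov : IsCoveringMapOn f T) (hU : IsOpen U) (hconv : Convex ℝ U)
    (he : ContinuousOn e U) (heT : MapsTo e U T) (ha : a ∈ U) (hx : f x = e a) :
    ∃ F : E → X, ContinuousOn F U ∧ (∀ u ∈ U, f (F u) = e u) ∧ F a = x := by
  have : ContractibleSpace U := hconv.contractibleSpace ⟨a, ha⟩
  have : LocallyPathConnectedSpace U := hU.locallyPathConnectedSpace
  obtain ⟨Φ, ⟨hΦa, hΦ⟩, -⟩ := hcov.existsUnique_continuousMap_lifts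
    (⟨U.domRestrict e, he.domRestrict⟩ : C(U, Y)) (a₀ := ⟨a, ha⟩) hx fun u => heT u.2
  classical
  refine ⟨fun u => if hu : u ∈ U then Φ ⟨u, hu⟩ else x, ?_, fun u hu => ?_, ?_⟩
  · rw [continuousOn_iff_continuous_domRestrict]
    exact Φ.continuous.congr fun u => by simp [domRestrict_apply]
  · simpa [hu] using congrFun hΦ ⟨u, hu⟩
  · simpa [ha] using hΦa

/-- `F` is a holomorphic branch of `f⁻¹ ∘ exp` on the half-plane `Re ζ > ρ`: the logarithmic
coordinate of Eremenko and Lyubich on a tract of `f` over `{w | exp ρ < ‖w‖}`. -/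
structure IsExpLift (f F : ℂ → ℂ) (ρ : ℝ) : Prop where
  differentiableOn : DifferentiableOn ℂ F {ζ | ρ < ζ.re}
  map_eq : ∀ ζ : ℂ, ρ < ζ.re → f (F ζ) = Complex.exp ζ

variable {f F F₁ F₂ : ℂ → ℂ} {ρ p : ℝ} {ζ₀ z₀ : ℂ}

theorem exists_isExpLift {T : Set ℂ} (hf : Differentiable ℂ f) (hcov : IsCoveringMapOn f T)
    (hT : {w : ℂ | Real.exp ρ < ‖w‖} ⊆ T) (hζ₀ : ρ < ζ₀.re) (hz₀ : f z₀ = Complex.exp ζ₀) :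
    ∃ F, IsExpLift f F ρ ∧ F ζ₀ = z₀ := by
  have hopen := Complex.isOpen_re_gt ρ
  obtain ⟨F, hF, hfF, hFζ₀⟩ := exists_continuousOn_lift_of_convex hcov hopen
    (convex_halfSpace_re_gt ρ) Complex.continuous_exp.continuousOn
    (fun ζ hζ => hT (by simpa [Complex.norm_exp] using hζ)) hζ₀ hz₀
  refine ⟨F, ⟨fun ζ hζ => ?_, hfF⟩, hFζ₀⟩
  have hnhds := hopen.mem_nhds hζ
  have hexp_ne : ∀ᶠ w in 𝓝[≠] ζ, Complex.exp w ≠ Complex.exp ζ :=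
    (Complex.hasDerivAt_exp ζ).eventually_ne (Complex.exp_ne_zero ζ)
  refine (analyticAt_of_comp_eventuallyEq (hf.analyticAt _) analyticAt_cexp (fun hconst => ?_) ?_
    (eventuallyEq_of_mem hnhds hfF)).differentiableAt.differentiableWithinAt
  · obtain ⟨w, hw, hw'⟩ := (hexp_ne.and (hconst.filter_mono nhdsWithin_le_nhds)).exists
    exact hw hw'
  · filter_upwards [hnhds] with w hw using hF.continuousAt (hopen.mem_nhds hw)

namespace IsExpLift

theorem norm_map (h : IsExpLift f F ρ) {ζ : ℂ} (hζ : ρ < ζ.re) : ‖f (F ζ)‖ = Real.exp ζ.re := by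
  rw [h.map_eq ζ hζ, Complex.norm_exp]

theorem deriv_mul_deriv (h : IsExpLift f F ρ) (hf : Differentiable ℂ f) {ζ : ℂ} (hζ : ρ < ζ.re) :
    deriv f (F ζ) * deriv F ζ = f (F ζ) := by
  have hnhds := (Complex.isOpen_re_gt ρ).mem_nhds hζ
  have hcomp : f ∘ F =ᶠ[𝓝 ζ] Complex.exp := eventuallyEq_of_mem hnhds h.map_eq
  rw [← deriv_comp ζ (hf _) (h.differentiableOn.differentiableAt hnhds), hcomp.deriv_eq,
    Complex.deriv_exp, h.map_eq ζ hζ]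

theorem deriv_mul_deriv_ne_zero (h : IsExpLift f F ρ) (hf : Differentiable ℂ f) {ζ : ℂ}
    (hζ : ρ < ζ.re) : deriv f (F ζ) * deriv F ζ ≠ 0 := by
  rw [h.deriv_mul_deriv hf hζ, h.map_eq ζ hζ]
  exact Complex.exp_ne_zero ζ

theorem isOpen_image (h : IsExpLift f F ρ) (hf : Differentiable ℂ f) {s : Set ℂ} (hs : IsOpen s)
    (hsub : s ⊆ {ζ | ρ < ζ.re}) : IsOpen (F '' s) := by
  refine isOpen_iff_mem_nhds.2 ?_
  rintro _ ⟨ζ, hζ, rfl⟩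
  have hF := (h.differentiableOn.analyticAt
    ((Complex.isOpen_re_gt ρ).mem_nhds (hsub hζ))).hasStrictDerivAt
  rw [← hF.map_nhds_eq (right_ne_zero_of_mul (h.deriv_mul_deriv_ne_zero hf (hsub hζ)))]
  exact image_mem_map (hs.mem_nhds hζ)

theorem eqOn (h₁ : IsExpLift f F₁ ρ) (h₂ : IsExpLift f F₂ ρ) (hf : Differentiable ℂ f)
    (hζ₀ : ρ < ζ₀.re) (heq : F₁ ζ₀ = F₂ ζ₀) : EqOn F₁ F₂ {ζ | ρ < ζ.re} := by
  have hopen := Complex.isOpen_re_gt ρ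
  have hnhds := hopen.mem_nhds hζ₀
  have hleft := (hf.analyticAt (F₁ ζ₀)).hasStrictDerivAt.eventually_left_inverse
    (left_ne_zero_of_mul (h₁.deriv_mul_deriv_ne_zero hf hζ₀))
  refine (h₁.differentiableOn.analyticOnNhd hopen).eqOn_of_preconnected_of_eventuallyEq
    (h₂.differentiableOn.analyticOnNhd hopen) (convex_halfSpace_re_gt ρ).isPreconnected hζ₀ ?_
  have hF₁ := (h₁.differentiableOn.differentiableAt hnhds).continuousAt
  have hF₂ := (h₂.differentiableOn.differentiableAt hnhds).continuousAt
  rw [ContinuousAt, ← heq] at hF₂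
  filter_upwards [hF₁.eventually hleft, hF₂.eventually hleft, hnhds] with ζ hζ₁ hζ₂ hζ
  rw [← hζ₁, ← hζ₂, h₁.map_eq ζ hζ, h₂.map_eq ζ hζ]

theorem comp_add_int_mul (h : IsExpLift f F ρ) (n : ℤ) :
    IsExpLift f (fun ζ => F (ζ + (2 * Real.pi * n : ℝ) * Complex.I)) ρ where
  differentiableOn := h.differentiableOn.comp (by fun_prop) fun ζ hζ => by simpa using hζ
  map_eq ζ hζ := by
    rw [h.map_eq _ (by simpa using hζ)]
    exact Complex.exp_eq_exp_iff_exists_int.2 ⟨n, by push_cast; ring⟩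

theorem injOn_or_periodic (h : IsExpLift f F ρ) (hf : Differentiable ℂ f) :
    InjOn F {ζ | ρ < ζ.re} ∨
      ∃ p : ℝ, 0 < p ∧ ∀ ζ : ℂ, ρ < ζ.re → F (ζ + p * Complex.I) = F ζ := by
  refine or_iff_not_imp_left.2 fun hinj => ?_
  simp only [InjOn, not_forall] at hinj
  obtain ⟨ζ₁, hζ₁, ζ₂, hζ₂, heq, hne⟩ := hinj
  obtain ⟨n, hn⟩ := Complex.exp_eq_exp_iff_exists_int.1
    ((h.map_eq ζ₁ hζ₁).symm.trans ((congrArg f heq).trans (h.map_eq ζ₂ hζ₂)))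
  wlog hpos : 0 < n generalizing ζ₁ ζ₂ n
  · refine this ζ₂ hζ₂ ζ₁ hζ₁ heq.symm (Ne.symm hne) (-n) (by rw [hn]; push_cast; ring) ?_
    have : n ≠ 0 := by rintro rfl; exact hne (by simpa using hn)
    lia
  refine ⟨2 * Real.pi * n, by positivity,
    (h.comp_add_int_mul n).eqOn h hf hζ₂ ?_⟩
  rw [← heq, hn]
  congr 1
  push_cast
  ring

theorem isCompact_image_re_preimage (h : IsExpLift f F ρ) (hp : 0 < p)
    (hper : ∀ ζ : ℂ, ρ < ζ.re → F (ζ + p * Complex.I) = F ζ) {T : Set ℝ} (hT : IsCompact T)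
    (hTρ : T ⊆ Ioi ρ) : IsCompact (F '' (Complex.re ⁻¹' T)) := by
  have hstrip : F '' (Complex.re ⁻¹' T) = F '' (T ×ℂ Icc 0 p) := by
    refine Subset.antisymm ?_ (image_mono fun ζ hζ => hζ.1)
    rintro _ ⟨ζ, hζ, rfl⟩
    have hperiodic : Function.Periodic (fun y : ℝ => F (ζ.re + y * Complex.I)) p := fun y => by
      simpa [add_mul, add_assoc] using hper (ζ.re + y * Complex.I) (by simpa using hTρ hζ)
    obtain ⟨y, hy, hFy⟩ := hperiodic.exists_mem_Ico₀ hp ζ.im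
    rw [Complex.re_add_im] at hFy
    exact ⟨ζ.re + y * Complex.I, by simpa [Complex.mem_reProdIm] using ⟨hζ, hy.1, hy.2.le⟩,
      hFy.symm⟩
  rw [hstrip]
  exact (hT.reProdIm isCompact_Icc).image_of_continuousOn
    (h.differentiableOn.continuousOn.mono fun ζ hζ => hTρ hζ.1)

theorem isClosed_image_of_periodic (h : IsExpLift f F ρ) (hf : Continuous f) (hp : 0 < p)
    (hper : ∀ ζ : ℂ, ρ < ζ.re → F (ζ + p * Complex.I) = F ζ) {ρ' : ℝ} (hρ : ρ < ρ') :
    IsClosed (F '' {ζ | ρ' ≤ ζ.re}) := by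
  refine isClosed_of_closure_subset fun z hz => ?_
  have hz' : z ∈ closure ({w | ‖f w‖ < ‖f z‖ + 1} ∩ F '' {ζ | ρ' ≤ ζ.re}) :=
    (isOpen_lt hf.norm continuous_const).inter_closure ⟨by simp, hz⟩
  have hcpt := h.isCompact_image_re_preimage hp hper (T := Icc ρ' (Real.log (‖f z‖ + 1)))
    isCompact_Icc fun t ht => hρ.trans_le ht.1
  have hsub : {w | ‖f w‖ < ‖f z‖ + 1} ∩ F '' {ζ | ρ' ≤ ζ.re} ⊆
      F '' (Complex.re ⁻¹' Icc ρ' (Real.log (‖f z‖ + 1))) := by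
    rintro _ ⟨hw, ζ, hζ, rfl⟩
    have hw : ‖f (F ζ)‖ < ‖f z‖ + 1 := hw
    rw [h.norm_map (hρ.trans_le hζ), ← Real.lt_log_iff_exp_lt (by positivity)] at hw
    exact ⟨ζ, ⟨hζ, hw.le⟩, rfl⟩
  exact image_mono (fun ζ hζ => hζ.1) (closure_minimal hsub hcpt.isClosed hz')

theorem exists_lt_norm (h : IsExpLift f F ρ) (hf : Continuous f) (ρ' M : ℝ) :
    ∃ ζ : ℂ, ρ < ζ.re ∧ ρ' < ζ.re ∧ M < ‖F ζ‖ := by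
  obtain ⟨B, hB⟩ := ((isCompact_closedBall (0 : ℂ) M).image hf).isBounded.exists_norm_le
  obtain ⟨t, ht, htρ, htρ'⟩ := ((Real.tendsto_exp_atTop.eventually_gt_atTop B).and
    ((eventually_gt_atTop ρ).and (eventually_gt_atTop ρ'))).exists
  refine ⟨t, htρ, htρ', ?_⟩
  by_contra! hle
  have hfB := hB _ (mem_image_of_mem f (mem_closedBall_zero_iff.2 hle))
  rw [h.norm_map htρ, Complex.ofReal_re] at hfB
  exact hfB.not_gt ht

theorem eventually_lt_norm_of_periodic (h : IsExpLift f F ρ) (hf : Differentiable ℂ f)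
    (hp : 0 < p) (hper : ∀ ζ : ℂ, ρ < ζ.re → F (ζ + p * Complex.I) = F ζ) :
    ∀ᶠ z in Bornology.cobounded ℂ, Real.exp ρ < ‖f z‖ := by
  have hlt := lt_add_one ρ
  have hsub : {ζ : ℂ | ρ + 1 < ζ.re} ⊆ {ζ | ρ < ζ.re} := fun ζ hζ => hlt.trans hζ
  obtain ⟨M, hM⟩ := (h.isCompact_image_re_preimage hp hper (T := {ρ + 1}) isCompact_singleton
    (singleton_subset_iff.2 hlt)).isBounded.exists_pos_norm_le
  obtain ⟨ζ₁, -, hζ₁, hFζ₁⟩ := h.exists_lt_norm hf.continuous (ρ + 1) M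
  have hclosure : closure (F '' {ζ | ρ + 1 < ζ.re}) ∩ {z | M < ‖z‖} ⊆
      F '' {ζ | ρ + 1 < ζ.re} := by
    rintro z ⟨hz, hzM⟩
    obtain ⟨ζ, hζ, rfl⟩ := closure_minimal (image_mono <| ofPred_subset_ofPred.2 fun ζ hζ => hζ.le)
      (h.isClosed_image_of_periodic hf.continuous hp hper hlt) hz
    have hζ : ρ + 1 ≤ ζ.re := hζ
    refine ⟨ζ, hζ.lt_of_ne fun heq => ?_, rfl⟩
    exact (hM.2 _ ⟨ζ, heq.symm, rfl⟩).not_gt hzM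
  have hcover : {z : ℂ | M < ‖z‖} ⊆ F '' {ζ | ρ + 1 < ζ.re} :=
    (isPreconnected_setOf_lt_norm hM.1).subset_of_closure_inter_subset
      (h.isOpen_image hf (Complex.isOpen_re_gt _) hsub) ⟨F ζ₁, hFζ₁, ζ₁, hζ₁, rfl⟩ hclosure
  filter_upwards [tendsto_norm_cobounded_atTop.eventually_gt_atTop M] with z hz
  obtain ⟨ζ, hζ, rfl⟩ := hcover hz
  rw [h.norm_map (hsub hζ)]
  exact Real.exp_lt_exp.2 (hsub hζ)

theorem lt_norm_of_injOn (h : IsExpLift f F ρ) (hf : Differentiable ℂ f)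
    (hinj : InjOn F {ζ | ρ < ζ.re}) {ζ z : ℂ} (hζ : ρ < ζ.re)
    (hz : 40 * ‖logDeriv f (F ζ)‖ * ‖z - F ζ‖ < ζ.re - ρ) : Real.exp ρ < ‖f z‖ := by
  have hball : ball ζ (ζ.re - ρ) ⊆ {ζ | ρ < ζ.re} := fun w hw => by
    have hre := (Complex.re_le_norm (ζ - w)).trans_lt (mem_ball_iff_norm'.1 hw)
    rw [Complex.sub_re] at hre
    exact (sub_lt_sub_iff_left _).1 hre
  have hkoebe := ball_subset_image_of_injOn (sub_pos.2 hζ) (h.differentiableOn.mono hball)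
    (hinj.mono hball)
  have hF' : 0 < ‖deriv F ζ‖ :=
    norm_pos_iff.2 (right_ne_zero_of_mul (h.deriv_mul_deriv_ne_zero hf hζ))
  have hchain : ‖logDeriv f (F ζ)‖ * ‖deriv F ζ‖ = 1 := by
    have hne : f (F ζ) ≠ 0 := h.map_eq ζ hζ ▸ Complex.exp_ne_zero ζ
    rw [logDeriv_apply, ← norm_mul, div_mul_eq_mul_div, h.deriv_mul_deriv hf hζ, div_self hne,
      norm_one]
  obtain ⟨w, hw, rfl⟩ := hkoebe (a := z) <| by
    rw [mem_ball_iff_norm, lt_div_iff₀ (by norm_num)]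
    calc ‖z - F ζ‖ * 40 = 40 * ‖logDeriv f (F ζ)‖ * ‖z - F ζ‖ * ‖deriv F ζ‖ := by
          linear_combination (-40 * ‖z - F ζ‖) * hchain
      _ < (ζ.re - ρ) * ‖deriv F ζ‖ := mul_lt_mul_of_pos_right hz hF'
  rw [h.norm_map (hball hw)]
  exact Real.exp_lt_exp.2 (hball hw)

end IsExpLift

theorem eventually_lt_norm_or_forall_lt_norm {T : Set ℂ} {R : ℝ} (hf : Differentiable ℂ f)
    (hcov : IsCoveringMapOn f T) (hR : 0 < R) (hT : {w : ℂ | R < ‖w‖} ⊆ T) :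
    (∀ᶠ z in Bornology.cobounded ℂ, R < ‖f z‖) ∨
      ∀ c z : ℂ, R < ‖f c‖ →
        40 * ‖logDeriv f c‖ * ‖z - c‖ < Real.log ‖f c‖ - Real.log R → R < ‖f z‖ := by
  refine or_iff_not_imp_left.2 fun hnot c z hc hz => ?_
  have hexp : Complex.exp (Complex.log (f c)) = f c :=
    Complex.exp_log (norm_pos_iff.1 (hR.trans hc))
  have hlog : Real.log R < (Complex.log (f c)).re := by
    simpa [Complex.log_re] using Real.log_lt_log hR hc
  obtain ⟨F, hF, hFc⟩ := exists_isExpLift hf hcov (by rwa [Real.exp_log hR]) hlog hexp.symm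
  rw [← Real.exp_log hR]
  rcases hF.injOn_or_periodic hf with hinj | ⟨p, hp, hper⟩
  · exact hF.lt_norm_of_injOn hf hinj hlog (by rwa [hFc, Complex.log_re])
  · refine absurd ?_ hnot
    simpa [Real.exp_log hR] using hF.eventually_lt_norm_of_periodic hf hp hper

end ExpLifts

section Sectors

variable {f : ℂ → ℂ} {T : Set ℂ} {R K : ℝ} {u : ℂ}

/-- The sector condition along the ray `ℝ₊u` at the single level `R`: outside a bounded set,
`|f| > R` on a sector around the ray, encoded as a union of discs of radius `ϑx`. -/
def ExceedsOnSector (f : ℂ → ℂ) (u : ℂ) (R : ℝ) : Prop :=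
  ∃ ϑ > (0 : ℝ), ∃ R' > (0 : ℝ), ∀ x : ℝ, R' < x → ∀ y : ℂ, ‖y‖ < ϑ * x → R < ‖f (u * x + y)‖

/-- The sector condition along the ray `ℝ₊u` in an arbitrary complex direction `u`; for `u = σ`
real it is `SectorCondAt f σ`. -/
def SectorCondAlong (f : ℂ → ℂ) (u : ℂ) : Prop :=
  ∃ R₀ > (0 : ℝ), ∀ R ≥ R₀, ExceedsOnSector f u R

theorem ExceedsOnSector.exists_norm_logDeriv_le (h : ExceedsOnSector f u R)
    (hf : Differentiable ℂ f) (hR : 1 ≤ R) :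
    ∃ r > 0, ∃ K > 0, ∀ x : ℝ, r ≤ x →
      ‖logDeriv f (u * x)‖ ≤ K * Real.log ‖f (u * x)‖ / x := by
  obtain ⟨ϑ, hϑ, R', hR', hsector⟩ := h
  refine ⟨R' + 1, by positivity, 2 / ϑ, by positivity, fun x hx => ?_⟩
  have hx0 : 0 < x := by linarith
  refine (norm_logDeriv_le_of_one_lt_norm (mul_pos hϑ hx0) hf.differentiableOn fun z hz => ?_)
    |>.trans_eq (by field_simp)
  simpa using hR.trans_lt (hsector x (by linarith) (z - u * x) (mem_ball_iff_norm.1 hz))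

theorem exceedsOnSector_of_eventually_cobounded (hu : u ≠ 0)
    (h : ∀ᶠ z in Bornology.cobounded ℂ, R < ‖f z‖) : ExceedsOnSector f u R := by
  rw [← comap_norm_atTop, eventually_comap] at h
  obtain ⟨M, hM⟩ := eventually_atTop.1 h
  have hu' : 0 < ‖u‖ := norm_pos_iff.2 hu
  refine ⟨‖u‖ / 2, by positivity, max 1 (2 * M / ‖u‖), by positivity, fun x hx y hy => ?_⟩
  have hx1 : 1 < x := (le_max_left _ _).trans_lt hx
  have hxM : 2 * M < x * ‖u‖ := (div_lt_iff₀ hu').1 ((le_max_right _ _).trans_lt hx)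
  have hnorm := norm_sub_le_norm_add (u * x) y
  rw [norm_mul, Complex.norm_of_nonneg (by linarith : 0 ≤ x)] at hnorm
  exact hM _ (by linarith) _ rfl

theorem exceedsOnSector_of_norm_logDeriv_le (hf : Differentiable ℂ f) (hcov : IsCoveringMapOn f T)
    (hR : 0 < R) (hT : {w : ℂ | R < ‖w‖} ⊆ T)
    (hu : Tendsto (fun x : ℝ => ‖f (u * x)‖) atTop atTop) (hK : 0 < K)
    (hbound : ∀ᶠ x : ℝ in atTop, ‖logDeriv f (u * x)‖ ≤ K * Real.log ‖f (u * x)‖ / x) :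
    ExceedsOnSector f u R := by
  rcases eventually_lt_norm_or_forall_lt_norm hf hcov hR hT with hinfty | htract
  · refine exceedsOnSector_of_eventually_cobounded ?_ hinfty
    rintro rfl
    simp only [zero_mul] at hu
    exact not_tendsto_const_atTop _ _ hu
  · have hlog : Tendsto (fun x : ℝ => Real.log ‖f (u * x)‖) atTop atTop :=
      Real.tendsto_log_atTop.comp hu
    obtain ⟨X, hX⟩ := eventually_atTop.1 <| hbound.and <| (hu.eventually_gt_atTop R).and <|
      (hlog.eventually_gt_atTop 0).and (hlog.eventually_gt_atTop (2 * Real.log R))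
    refine ⟨1 / (80 * K), by positivity, max 1 X, by positivity, fun x hx y hy => ?_⟩
    have hx0 : 0 < x := one_pos.trans ((le_max_left _ _).trans_lt hx)
    obtain ⟨hle, hfR, hpos, hlogR⟩ := hX x ((le_max_right _ _).trans hx.le)
    refine htract (u * x) _ hfR ?_
    rw [add_sub_cancel_left]
    calc 40 * ‖logDeriv f (u * x)‖ * ‖y‖
        ≤ 40 * (K * Real.log ‖f (u * x)‖ / x) * (1 / (80 * K) * x) := by gcongr
      _ = Real.log ‖f (u * x)‖ / 2 := by field_simp; norm_num
      _ < Real.log ‖f (u * x)‖ - Real.log R := by linarith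

end Sectors

theorem sector_condition_iff_log_deriv_general {f : ℂ → ℂ} {S : Set ℂ} (hf : Differentiable ℂ f)
    (hcov : IsCoveringMapOn f Sᶜ) (hS : Bornology.IsBounded S) {u : ℂ}
    (hu : Tendsto (fun x : ℝ => ‖f (u * x)‖) atTop atTop) :
    SectorCondAlong f u ↔
      ∃ r > (0 : ℝ), ∃ K > (0 : ℝ), ∀ x : ℝ, r ≤ x →
        ‖deriv f (u * x)‖ / ‖f (u * x)‖ ≤ K * Real.log ‖f (u * x)‖ / x := by
  simp only [← norm_div, ← logDeriv_apply]
  constructor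
  · rintro ⟨R₀, -, hsector⟩
    exact (hsector (max R₀ 1) (le_max_left _ _)).exists_norm_logDeriv_le hf (le_max_right _ _)
  · rintro ⟨r, -, K, hK, hbound⟩
    obtain ⟨B, hB, hSB⟩ := hS.exists_pos_norm_le
    exact ⟨B, hB, fun R hR => exceedsOnSector_of_norm_logDeriv_le hf hcov (hB.trans_le hR)
      (fun w hw hwS => (hSB w hwS).not_gt (hR.trans_lt hw)) hu hK
      (eventually_atTop.2 ⟨r, hbound⟩)⟩

/-- **Theorem (Statement 12).** For `f ∈ B_ℝ` and `σ ∈ Σ₀(f)`, the sector condition at `σ∞`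
holds if and only if `|f'(σx)|/|f(σx)| ≤ K log|f(σx)| / x` for some `r, K > 0` and all `x ≥ r`. -/
theorem sector_condition_iff_log_deriv
    (f : ℂ → ℂ) (S : Set ℂ)
    (hf : TranscendentalEntire f)
    (hS : IsSingularValueSet f S)
    (hSbdd : Bornology.IsBounded S)
    (hreal : f '' {z : ℂ | z.im = 0} ⊆ {z : ℂ | z.im = 0})
    (σ : ℝ) (hσ : σ = 1 ∨ σ = -1)
    (hσ₀ : Tendsto (fun x : ℝ => ‖f ((σ * x : ℝ) : ℂ)‖) atTop atTop) :
    SectorCondAt f σ ↔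
      ∃ r > (0 : ℝ), ∃ K > (0 : ℝ), ∀ x : ℝ, r ≤ x →
        ‖deriv f ((σ * x : ℝ) : ℂ)‖ / ‖f ((σ * x : ℝ) : ℂ)‖ ≤
          K * Real.log ‖f ((σ * x : ℝ) : ℂ)‖ / x := by
  simpa [SectorCondAlong, ExceedsOnSector, SectorCondAt] using
    sector_condition_iff_log_deriv_general hf.1 hS.2.1 hSbdd (u := σ) (by simpa using hσ₀)
end
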